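/- Let n∈ℕ, p∈[2,∞), s∈(0,1), and write p' = p/(p−1). Let Ω⊆ℝⁿ be a bounded open set, f∈L^{p'}_loc(Ω), and let B_{2R}(x_o) have closure contained in Ω. Let u:ℝⁿ→ℝ be a local weak solution of (−Δ_p)^s u = f in Ω, and let v:ℝⁿ→ℝ be a local weak solution of (−Δ_p)^s v = 0 in B_R(x_o) with v∈L^p(B_R(x_o)), [v]_{W^{s,p}(B_R(x_o))}<∞ and v = u a.e. in ℝⁿ∖B_R(x_o). Set w := u−v. Then there exists a constant c = c(n,p,s) such that ∬_{ℝⁿ×ℝⁿ} |w(x)−w(y)|^p/|x−y|^{n+sp} dx dy ≤ c R^{sp'} ∫_{B_R(x_o)} |f|^{p'} dx. -/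

import Mathlib

open MeasureTheory Metric Set
open scoped ENNReal

noncomputable section

/-- Double Gagliardo integral `∬_{D×D} |u(x)-u(y)|^p / |x-y|^{n+sp} dx dy` in `ℝ≥0∞`. -/
def gagliardoE (n : ℕ) (s p : ℝ) (D : Set (EuclideanSpace ℝ (Fin n)))
    (u : EuclideanSpace ℝ (Fin n) → ℝ) : ℝ≥0∞ :=
  ∫⁻ x in D, ∫⁻ y in D, ENNReal.ofReal (|u x - u y| ^ p / dist x y ^ ((n : ℝ) + s * p))

/-- Nonlocal tail `Tail(u; B_R(x₀))` in `ℝ≥0∞`. -/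
def tailE (n : ℕ) (s p : ℝ) (u : EuclideanSpace ℝ (Fin n) → ℝ)
    (x₀ : EuclideanSpace ℝ (Fin n)) (R : ℝ) : ℝ≥0∞ :=
  (ENNReal.ofReal (R ^ (s * p)) *
      ∫⁻ x in (ball x₀ R)ᶜ,
        ENNReal.ofReal (|u x| ^ (p - 1) / dist x x₀ ^ ((n : ℝ) + s * p))) ^ (1 / (p - 1))

/-- `f ∈ L^q_loc(D)`. -/
def MemLploc (n : ℕ) (q : ℝ) (D : Set (EuclideanSpace ℝ (Fin n)))
    (f : EuclideanSpace ℝ (Fin n) → ℝ) : Prop :=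
  Measurable f ∧
    ∀ K : Set (EuclideanSpace ℝ (Fin n)), K ⊆ D → IsCompact K →
      (∫⁻ x in K, ENNReal.ofReal (|f x| ^ q)) < ⊤

/-- `u` is a local weak solution of `(-Δ_p)^s u = f` in `D`. -/
def IsLocalWeakSolution (n : ℕ) (p s : ℝ) (D : Set (EuclideanSpace ℝ (Fin n)))
    (f u : EuclideanSpace ℝ (Fin n) → ℝ) : Prop :=
  Measurable u ∧
  (∀ K : Set (EuclideanSpace ℝ (Fin n)), K ⊆ D → IsCompact K →
      (∫⁻ x in K, ENNReal.ofReal (|u x| ^ p)) < ⊤ ∧ gagliardoE n s p K u < ⊤) ∧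
  (∫⁻ x, ENNReal.ofReal (|u x| ^ (p - 1) / (1 + ‖x‖) ^ ((n : ℝ) + s * p))) < ⊤ ∧
  ∀ φ : EuclideanSpace ℝ (Fin n) → ℝ, Measurable φ →
    (∃ K : Set (EuclideanSpace ℝ (Fin n)), IsCompact K ∧ K ⊆ D ∧
      ∀ᵐ x, x ∉ K → φ x = 0) →
    (∫⁻ x, ENNReal.ofReal (|φ x| ^ p)) < ⊤ →
    gagliardoE n s p Set.univ φ < ⊤ →
    (∫ x, ∫ y,
        |u x - u y| ^ (p - 2) * (u x - u y) * (φ x - φ y) / dist x y ^ ((n : ℝ) + s * p)) =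
      ∫ x in D, f x * φ x

/-- The signed `γ`-power `𝐚^γ = |a|^{γ-1} a`. -/
def sgnPow (γ a : ℝ) : ℝ := |a| ^ (γ - 1) * a

/-!
The natural test function for the difference of the two equations is `w = u - v` itself, but `w` is
not known to have compact support in the ball `B = B_R(x₀)`. One tests instead with `ψ² w`, where
`ψ = (1 - ε / δ)₊` and `δ` is the distance to the complement of `B`. On `B × B` the truncation costs
a multiple of `(∫_B |w|^p ψ² δ^{-σ})^{1/p}`, `σ = sp`, uniformly in `ε`. Since `w = 0` outside `B`,
the part of the form on `B × Bᶜ` has a sign and controls `∫_B |w|^p ψ² δ^{-σ}` itself, so this Hardy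
energy absorbs the cost and stays bounded as `ε → 0`. Dominated convergence on `B × B` and Fatou's
lemma elsewhere then give the energy inequality
`∬ (|Du|^{p-2} Du - |Dv|^{p-2} Dv) Dw |x - y|^{-(n + σ)} dx dy ≤ ∫_B |f w| dx`, with `D` the
increment. Monotonicity of the flux bounds the left side below by a multiple of `[w]^p`, and
Hölder's inequality with the fractional Poincaré inequality on `B`, a byproduct of the Hardy bound,
estimates the right side by `C R^s ‖f‖ [w]`.
-/

open Filter Topology
open Module (finrank)

theorem one_add_norm_le_mul_dist {E : Type*} [SeminormedAddCommGroup E] {x₀ x y : E} {r R : ℝ}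
    (hrR : r < R) (hx : x ∈ closedBall x₀ r) (hy : y ∉ ball x₀ R) :
    1 + ‖y‖ ≤ (1 + (1 + ‖x₀‖ + r) / (R - r)) * dist x y := by
  rw [mem_closedBall] at hx
  rw [mem_ball, not_lt] at hy
  have hr : 0 ≤ r := dist_nonneg.trans hx
  have hy_le : dist y x₀ ≤ dist x y + dist x x₀ := by
    simpa only [dist_comm y x] using dist_triangle y x x₀
  have hsep : R - r ≤ dist x y := by linarith
  have hnorm : ‖y‖ ≤ ‖x₀‖ + dist y x₀ := by
    simpa only [dist_eq_norm, add_sub_cancel] using norm_add_le x₀ (y - x₀)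
  calc 1 + ‖y‖ ≤ dist x y + (1 + ‖x₀‖ + r) * 1 := by linarith
    _ ≤ dist x y + (1 + ‖x₀‖ + r) * (dist x y / (R - r)) := by
        gcongr
        exact (one_le_div (sub_pos.mpr hrR)).mpr hsep
    _ = (1 + (1 + ‖x₀‖ + r) / (R - r)) * dist x y := by ring

section Kernel

variable {E : Type*} [NormedAddCommGroup E] [NormedSpace ℝ E]

/-- The singular kernel `|x - y|^{-(d + σ)}` of the fractional seminorm, `d` being the dimension.
On the diagonal it has the junk value `0`. -/
def gagliardoKernel (σ : ℝ) (x y : E) : ℝ := dist x y ^ (-(finrank ℝ E + σ))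

theorem gagliardoKernel_nonneg (σ : ℝ) (x y : E) : 0 ≤ gagliardoKernel σ x y :=
  Real.rpow_nonneg dist_nonneg _

theorem gagliardoKernel_comm (σ : ℝ) (x y : E) : gagliardoKernel σ x y = gagliardoKernel σ y x := by
  rw [gagliardoKernel, gagliardoKernel, dist_comm]

@[fun_prop]
theorem measurable_gagliardoKernel [FiniteDimensional ℝ E] [MeasurableSpace E] [BorelSpace E]
    (σ : ℝ) :
    Measurable fun z : E × E ↦ gagliardoKernel σ z.1 z.2 := by
  unfold gagliardoKernel
  fun_prop

theorem div_dist_rpow_eq_mul_gagliardoKernel (σ a : ℝ) (x y : E) :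
    a / dist x y ^ (finrank ℝ E + σ) = gagliardoKernel σ x y * a := by
  rw [gagliardoKernel, Real.rpow_neg dist_nonneg, div_eq_inv_mul]

theorem gagliardoKernel_add_smul (σ : ℝ) (x z : E) {ρ : ℝ} (hρ : 0 < ρ) :
    gagliardoKernel σ x (x + ρ • z) = ρ ^ (-(finrank ℝ E + σ)) * gagliardoKernel σ 0 z := by
  rw [gagliardoKernel, gagliardoKernel, dist_self_add_right, norm_smul, Real.norm_of_nonneg hρ.le,
    Real.mul_rpow hρ.le (norm_nonneg z), dist_zero_left]

theorem gagliardoKernel_le_of_le_dist {σ r : ℝ} (hσ : 0 < σ) {x y : E} (hr : 0 < r)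
    (h : r ≤ dist x y) : gagliardoKernel σ x y ≤ r ^ (-(finrank ℝ E + σ)) :=
  Real.rpow_le_rpow_of_nonpos hr h (by linarith [(finrank ℝ E).cast_nonneg (α := ℝ)])

theorem rpow_le_gagliardoKernel_of_dist_le {σ r : ℝ} (hσ : 0 < σ) {x y : E} (hxy : x ≠ y)
    (h : dist x y ≤ r) : r ^ (-(finrank ℝ E + σ)) ≤ gagliardoKernel σ x y :=
  Real.rpow_le_rpow_of_nonpos (dist_pos.mpr hxy) h
    (by linarith [(finrank ℝ E).cast_nonneg (α := ℝ)])

theorem exists_gagliardoKernel_le_one_add_norm {σ : ℝ} (hσ : 0 < σ) (x₀ : E) {r R : ℝ}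
    (hrR : r < R) :
    ∃ M, ∀ x ∈ closedBall x₀ r, ∀ y ∉ ball x₀ R,
      gagliardoKernel σ x y ≤ M * (1 + ‖y‖) ^ (-(finrank ℝ E + σ)) := by
  set L := 1 + (1 + ‖x₀‖ + r) / (R - r)
  refine ⟨L ^ (finrank ℝ E + σ), fun x hx y hy ↦ ?_⟩
  have hr : 0 ≤ r := dist_nonneg.trans (mem_closedBall.mp hx)
  have hL : 0 < L := by have := sub_pos.mpr hrR; positivity
  have hfar : (1 + ‖y‖) / L ≤ dist x y :=
    (div_le_iff₀' hL).mpr (one_add_norm_le_mul_dist hrR hx hy)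
  refine (gagliardoKernel_le_of_le_dist hσ (by positivity) hfar).trans_eq ?_
  rw [Real.div_rpow (by positivity) hL.le, Real.rpow_neg hL.le, div_inv_eq_mul, mul_comm]

theorem exists_dist_eq_add [Nontrivial E] (x₀ x : E) {r : ℝ} (hr : 0 ≤ r) :
    ∃ y, dist y x₀ = dist x x₀ + r ∧ dist x y = r := by
  obtain ⟨e, he, hx⟩ : ∃ e : E, ‖e‖ = 1 ∧ x = x₀ + dist x x₀ • e := by
    obtain rfl | hne := eq_or_ne x x₀
    · obtain ⟨e, he⟩ := exists_norm_eq E zero_le_one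
      exact ⟨e, he, by simp⟩
    · refine ⟨(dist x x₀)⁻¹ • (x - x₀), ?_, ?_⟩
      · rw [dist_eq_norm]
        exact norm_smul_inv_norm (𝕜 := ℝ) (sub_ne_zero.mpr hne)
      · rw [smul_inv_smul₀ (dist_ne_zero.mpr hne), add_sub_cancel]
  refine ⟨x + r • e, ?_, by simp [dist_eq_norm, norm_smul, he, abs_of_nonneg hr]⟩
  have : x + r • e - x₀ = (dist x x₀ + r) • e := by
    nth_rewrite 1 [hx]
    module
  rw [dist_eq_norm, this, norm_smul, he, mul_one, Real.norm_of_nonneg (by positivity)]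

end Kernel

section KernelIntegrals

variable {E : Type*} [NormedAddCommGroup E] [NormedSpace ℝ E] [MeasureSpace E]

variable (E) in
/-- The constant in the lower bound for the kernel mass of the exterior of a ball: the kernel is at
least `(3δ)^{-(d + σ)}` on a ball of radius `δ` outside, where `δ` is the distance to the sphere. -/
def exteriorConst (σ : ℝ) : ℝ≥0∞ :=
  ENNReal.ofReal (3 ^ (-(finrank ℝ E + σ))) * volume (ball (0 : E) 1)

variable [(volume : Measure E).IsAddHaarMeasure]

theorem exteriorConst_ne_zero (σ : ℝ) : exteriorConst E σ ≠ 0 :=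
  mul_ne_zero (ENNReal.ofReal_pos.mpr (by positivity)).ne' (measure_ball_pos _ _ one_pos).ne'

variable [FiniteDimensional ℝ E]

theorem exteriorConst_ne_top (σ : ℝ) : exteriorConst E σ ≠ ⊤ :=
  ENNReal.mul_ne_top ENNReal.ofReal_ne_top measure_ball_lt_top.ne

variable [BorelSpace E]

theorem lintegral_eq_mul_lintegral_add_smul (x : E) {ρ : ℝ} (hρ : 0 < ρ) {F : E → ℝ≥0∞}
    (hF : Measurable F) :
    ∫⁻ y, F y = ENNReal.ofReal (ρ ^ finrank ℝ E) * ∫⁻ z, F (x + ρ • z) := by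
  have hscale : ∫⁻ z, F (x + ρ • z) = ENNReal.ofReal (ρ ^ finrank ℝ E)⁻¹ * ∫⁻ y, F y := by
    rw [← lintegral_map (f := fun y ↦ F (x + y)) (by fun_prop) (measurable_const_smul ρ),
      Measure.map_addHaar_smul volume hρ.ne', lintegral_smul_measure,
      lintegral_add_left_eq_self F x, abs_of_pos (by positivity), smul_eq_mul]
  rw [hscale, ← mul_assoc, ← ENNReal.ofReal_mul (by positivity), mul_inv_cancel₀ (by positivity),
    ENNReal.ofReal_one, one_mul]

variable (E) in
/-- The kernel moment `∫ min(1, |z|)^p |z|^{-(d + σ)} dz`, finite precisely because the order `σ`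
lies between `0` and `p`. -/
def truncatedMoment (p σ : ℝ) : ℝ≥0∞ :=
  ∫⁻ z : E, ENNReal.ofReal (gagliardoKernel σ 0 z) * ‖min 1 ‖z‖‖ₑ ^ p

theorem truncatedMoment_lt_top [Nontrivial E] {p σ : ℝ} (hσ : 0 < σ) (hσp : σ < p) :
    truncatedMoment E p σ < ⊤ := by
  have hcast : ((finrank ℝ E - 1 : ℕ) : ℝ) = finrank ℝ E - 1 := by
    rw [Nat.cast_pred Module.finrank_pos]
  have hnear : IntegrableOn (fun r : ℝ ↦ r ^ (finrank ℝ E - 1) •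
      (r ^ (-(finrank ℝ E + σ)) * min 1 r ^ p)) (Ioc 0 1) := by
    have hpow : IntegrableOn (fun r : ℝ ↦ r ^ (p - σ - 1)) (Ioc 0 1) :=
      (intervalIntegrable_iff_integrableOn_Ioc_of_le zero_le_one).mp
        (intervalIntegral.intervalIntegrable_rpow' (by linarith))
    refine hpow.congr_fun (fun r hr ↦ ?_) measurableSet_Ioc
    rw [min_eq_right hr.2, ← Real.rpow_natCast, hcast, ← Real.rpow_add hr.1, smul_eq_mul,
      ← Real.rpow_add hr.1]
    ring_nf
  have hfar : IntegrableOn (fun r : ℝ ↦ r ^ (finrank ℝ E - 1) •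
      (r ^ (-(finrank ℝ E + σ)) * min 1 r ^ p)) (Ioi 1) := by
    refine (integrableOn_Ioi_rpow_of_lt (a := -σ - 1) (by linarith) one_pos).congr_fun
      (fun r hr ↦ ?_) measurableSet_Ioi
    have hr0 : 0 < r := one_pos.trans hr
    rw [min_eq_left hr.le, ← Real.rpow_natCast, hcast, Real.one_rpow, mul_one, smul_eq_mul,
      ← Real.rpow_add hr0]
    ring_nf
  have hint : Integrable fun z : E ↦ ‖z‖ ^ (-(finrank ℝ E + σ)) * min 1 ‖z‖ ^ p := by
    refine (integrable_fun_norm_addHaar (volume : Measure E)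
      (f := fun r ↦ r ^ (-(finrank ℝ E + σ)) * min 1 r ^ p)).mpr ?_
    rw [← Ioc_union_Ioi_eq_Ioi zero_le_one]
    exact hnear.union hfar
  refine lt_of_eq_of_lt (lintegral_congr fun z ↦ ?_) hint.2
  have hmin : 0 ≤ min 1 ‖z‖ := by positivity
  rw [enorm_mul, Real.enorm_rpow_of_nonneg hmin (hσ.trans hσp).le, gagliardoKernel, dist_zero_left,
    Real.enorm_of_nonneg (Real.rpow_nonneg (norm_nonneg z) _)]

theorem lintegral_gagliardoKernel_mul_min_dist_div (p σ : ℝ) (x : E) {ρ : ℝ} (hρ : 0 < ρ) :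
    ∫⁻ y, ENNReal.ofReal (gagliardoKernel σ x y) * ‖min 1 (dist x y / ρ)‖ₑ ^ p =
      ENNReal.ofReal (ρ ^ (-σ)) * truncatedMoment E p σ := by
  have hpow : ρ ^ finrank ℝ E * ρ ^ (-(finrank ℝ E + σ)) = ρ ^ (-σ) := by
    rw [← Real.rpow_natCast, ← Real.rpow_add hρ]
    ring_nf
  have (a : E) : Measurable (gagliardoKernel σ a) :=
    (measurable_gagliardoKernel σ).comp measurable_prodMk_left
  rw [lintegral_eq_mul_lintegral_add_smul x hρ (by fun_prop), truncatedMoment, ← hpow,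
    ENNReal.ofReal_mul (by positivity), mul_assoc,
    ← lintegral_const_mul (ENNReal.ofReal (ρ ^ (-(finrank ℝ E + σ)))) (by fun_prop)]
  congr 1
  refine lintegral_congr fun z ↦ ?_
  rw [gagliardoKernel_add_smul σ x z hρ, dist_self_add_right, norm_smul, Real.norm_of_nonneg hρ.le,
    mul_div_cancel_left₀ _ hρ.ne', ENNReal.ofReal_mul (by positivity), mul_assoc]

theorem exteriorConst_mul_le_lintegral_compl_ball [Nontrivial E] {σ : ℝ} (hσ : 0 < σ) {x₀ x : E}
    {R : ℝ} (hx : x ∈ ball x₀ R) :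
    exteriorConst E σ * ENNReal.ofReal ((R - dist x x₀) ^ (-σ)) ≤
      ∫⁻ y in (ball x₀ R)ᶜ, ENNReal.ofReal (gagliardoKernel σ x y) := by
  set δ := R - dist x x₀
  have hδ : 0 < δ := sub_pos.mpr hx
  obtain ⟨a, ha, hxa⟩ := exists_dist_eq_add x₀ x (r := 2 * δ) (by positivity)
  have hsub : ball a δ ⊆ (ball x₀ R)ᶜ := fun y hy hyB ↦ by
    rw [mem_ball, dist_comm] at hy
    rw [mem_ball] at hyB
    linarith [dist_triangle a y x₀]
  have hker : ∀ y ∈ ball a δ, ENNReal.ofReal ((3 * δ) ^ (-(finrank ℝ E + σ))) ≤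
      ENNReal.ofReal (gagliardoKernel σ x y) := fun y hy ↦ by
    refine ENNReal.ofReal_le_ofReal (rpow_le_gagliardoKernel_of_dist_le hσ ?_ ?_)
    · rintro rfl
      rw [mem_ball] at hy
      linarith
    · rw [mem_ball, dist_comm] at hy
      linarith [dist_triangle x a y]
  have hpow : (3 * δ) ^ (-(finrank ℝ E + σ)) * δ ^ finrank ℝ E =
      3 ^ (-(finrank ℝ E + σ)) * δ ^ (-σ) := by
    rw [Real.mul_rpow (by norm_num) hδ.le, mul_assoc, ← Real.rpow_natCast δ, ← Real.rpow_add hδ]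
    ring_nf
  calc exteriorConst E σ * ENNReal.ofReal (δ ^ (-σ))
      = ENNReal.ofReal ((3 * δ) ^ (-(finrank ℝ E + σ))) * volume (ball a δ) := by
        rw [Measure.addHaar_ball_of_pos _ _ hδ, ← mul_assoc, ← ENNReal.ofReal_mul (by positivity),
          hpow, exteriorConst, ENNReal.ofReal_mul (by positivity)]
        ring
    _ = ∫⁻ _ in ball a δ, ENNReal.ofReal ((3 * δ) ^ (-(finrank ℝ E + σ))) :=
        (setLIntegral_const _ _).symm
    _ ≤ ∫⁻ y in ball a δ, ENNReal.ofReal (gagliardoKernel σ x y) :=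
        setLIntegral_mono' measurableSet_ball hker
    _ ≤ _ := lintegral_mono_set hsub

end KernelIntegrals

section LebesgueSpaces

variable {α : Type*} [MeasurableSpace α] {μ : Measure α}

theorem eLpNorm_ofReal_rpow_eq_lintegral {f : α → ℝ} {p : ℝ} (hp : 0 < p) :
    eLpNorm f (ENNReal.ofReal p) μ ^ p = ∫⁻ x, ‖f x‖ₑ ^ p ∂μ := by
  rw [eLpNorm_eq_lintegral_rpow_enorm_toReal (ENNReal.ofReal_pos.mpr hp).ne' ENNReal.ofReal_ne_top,
    ENNReal.toReal_ofReal hp.le, ← ENNReal.rpow_mul, one_div_mul_cancel hp.ne', ENNReal.rpow_one]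

theorem eLpNorm_ofReal_eq_lintegral_rpow {f : α → ℝ} {p : ℝ} (hp : 0 < p) :
    eLpNorm f (ENNReal.ofReal p) μ = (∫⁻ x, ‖f x‖ₑ ^ p ∂μ) ^ p⁻¹ := by
  rw [← eLpNorm_ofReal_rpow_eq_lintegral hp, ENNReal.rpow_rpow_inv hp.ne']

theorem memLp_ofReal_iff_lintegral_lt_top {f : α → ℝ} {p : ℝ} (hp : 0 < p)
    (hf : AEStronglyMeasurable f μ) :
    MemLp f (ENNReal.ofReal p) μ ↔ ∫⁻ x, ‖f x‖ₑ ^ p ∂μ < ⊤ := by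
  rw [← eLpNorm_ofReal_rpow_eq_lintegral hp, ENNReal.rpow_lt_top_iff_of_pos hp, MemLp,
    and_iff_right hf]

theorem lintegral_le_of_tendsto_of_eventually_le {ι : Type*} {l : Filter ι}
    [l.IsCountablyGenerated] [l.NeBot] {F : ι → α → ℝ≥0∞} {g : α → ℝ≥0∞} {a : ι → ℝ≥0∞} {L : ℝ≥0∞}
    (hF : ∀ i, Measurable (F i)) (hlim : ∀ᵐ x ∂μ, Tendsto (fun i ↦ F i x) l (𝓝 (g x)))
    (hle : ∀ᶠ i in l, ∫⁻ x, F i x ∂μ ≤ a i) (ha : Tendsto a l (𝓝 L)) : ∫⁻ x, g x ∂μ ≤ L :=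
  calc ∫⁻ x, g x ∂μ = ∫⁻ x, liminf (fun i ↦ F i x) l ∂μ :=
        lintegral_congr_ae (hlim.mono fun _ hx ↦ hx.liminf_eq.symm)
    _ ≤ liminf (fun i ↦ ∫⁻ x, F i x ∂μ) l := lintegral_liminf_le hF
    _ ≤ liminf a l := liminf_le_liminf hle
    _ = L := ha.liminf_eq

theorem lintegral_enorm_mul_le_eLpNorm_mul_eLpNorm {f g : α → ℝ} {p q : ℝ≥0∞}
    [p.HolderConjugate q] (hf : AEStronglyMeasurable f μ) (hg : AEStronglyMeasurable g μ) :
    ∫⁻ x, ‖f x * g x‖ₑ ∂μ ≤ eLpNorm f p μ * eLpNorm g q μ := by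
  rw [← eLpNorm_one_eq_lintegral_enorm]
  exact eLpNorm_smul_le_mul_eLpNorm (φ := f) (f := g) (r := 1) hg hf

theorem memLp_restrict_union {f : α → ℝ} {q : ℝ≥0∞} {s t : Set α} (hs : MeasurableSet s)
    (ht : MeasurableSet t) (hfs : MemLp f q (μ.restrict s)) (hft : MemLp f q (μ.restrict t)) :
    MemLp f q (μ.restrict (s ∪ t)) := by
  rw [← memLp_indicator_iff_restrict (hs.union ht), ← union_sdiff_self,
    indicator_union_of_disjoint disjoint_sdiff_right]
  refine ((memLp_indicator_iff_restrict hs).mpr hfs).add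
    ((memLp_indicator_iff_restrict (ht.diff hs)).mpr ?_)
  exact hft.mono_measure (Measure.restrict_mono sdiff_subset le_rfl)

variable {μ : Measure (α × α)}

theorem memLp_of_norm_swap_eq (hμ : MeasurePreserving Prod.swap μ μ) {G : α × α → ℝ} {q : ℝ≥0∞}
    {K : Set α} (hK : MeasurableSet K) (hG : ∀ z, ‖G z.swap‖ = ‖G z‖) (hGm : Measurable G)
    (hzero : ∀ᵐ z ∂μ, z.1 ∉ K → z.2 ∉ K → G z = 0)
    (hmem : MemLp G q (μ.restrict (K ×ˢ univ))) : MemLp G q μ := by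
  have hmem_swap : MemLp G q (μ.restrict (univ ×ˢ K)) := by
    refine (memLp_congr_norm hGm.aestronglyMeasurable
      (hGm.comp measurable_swap).aestronglyMeasurable (.of_forall fun z ↦ (hG z).symm)).mpr ?_
    have := hμ.restrict_preimage (hK.prod .univ)
    rw [preimage_swap_prod] at this
    exact hmem.comp_measurePreserving this
  have hunion := memLp_restrict_union (hK.prod .univ) (.prod .univ hK) hmem hmem_swap
  rw [← memLp_indicator_iff_restrict ((hK.prod .univ).union (.prod .univ hK))] at hunion
  refine hunion.ae_eq ?_
  filter_upwards [hzero] with z hz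
  refine indicator_apply_eq_self.mpr fun h ↦ ?_
  rw [mem_union, not_or] at h
  exact hz (fun h₁ ↦ h.1 ⟨h₁, mem_univ _⟩) (fun h₂ ↦ h.2 ⟨mem_univ _, h₂⟩)

end LebesgueSpaces

section GagliardoMeasure

/-- The increment `(x, y) ↦ u x - u y`. -/
def incr {E : Type*} (u : E → ℝ) (z : E × E) : ℝ := u z.1 - u z.2

theorem norm_incr_swap {E : Type*} (u : E → ℝ) (z : E × E) : ‖incr u z.swap‖ = ‖incr u z‖ :=
  norm_sub_rev _ _

@[fun_prop]
theorem measurable_incr {E : Type*} [MeasurableSpace E] {u : E → ℝ} (hu : Measurable u) :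
    Measurable (incr u) :=
  (hu.comp measurable_fst).sub (hu.comp measurable_snd)

variable {E : Type*} [NormedAddCommGroup E] [NormedSpace ℝ E] [MeasureSpace E]

variable (E) in
/-- The measure `|x - y|^{-(d + σ)} dx dy` on pairs of points. With `σ = sp`, the seminorm
`[u]_{W^{s,p}(D)}` is the `L^p` norm of the increment of `u` on `D × D` for this measure. -/
def gagliardoMeasure (σ : ℝ) : Measure (E × E) :=
  volume.withDensity fun z ↦ ENNReal.ofReal (gagliardoKernel σ z.1 z.2)

theorem gagliardoMeasure_absolutelyContinuous (σ : ℝ) : gagliardoMeasure E σ ≪ volume :=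
  withDensity_absolutelyContinuous _ _

theorem ae_fst_and_snd_gagliardoMeasure (σ : ℝ) {P : E → Prop} (h : ∀ᵐ x, P x) :
    ∀ᵐ z ∂gagliardoMeasure E σ, P z.1 ∧ P z.2 :=
  (gagliardoMeasure_absolutelyContinuous σ).ae_le
    ((Measure.quasiMeasurePreserving_fst.ae h).and (Measure.quasiMeasurePreserving_snd.ae h))

variable [FiniteDimensional ℝ E] [BorelSpace E] [(volume : Measure E).IsAddHaarMeasure]

theorem setLIntegral_prod_gagliardoMeasure (σ : ℝ) {S T : Set E} (hS : MeasurableSet S)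
    (hT : MeasurableSet T) {F : E × E → ℝ≥0∞} (hF : Measurable F) :
    ∫⁻ z in S ×ˢ T, F z ∂gagliardoMeasure E σ =
      ∫⁻ x in S, ∫⁻ y in T, ENNReal.ofReal (gagliardoKernel σ x y) * F (x, y) := by
  rw [gagliardoMeasure, restrict_withDensity (hS.prod hT),
    lintegral_withDensity_eq_lintegral_mul _ (by fun_prop) hF, Measure.volume_eq_prod,
    ← Measure.prod_restrict, lintegral_prod _ (by fun_prop)]
  rfl

theorem measurePreserving_swap_gagliardoMeasure (σ : ℝ) :
    MeasurePreserving Prod.swap (gagliardoMeasure E σ) (gagliardoMeasure E σ) := by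
  refine ⟨measurable_swap, Measure.ext_of_lintegral _ fun F hF ↦ ?_⟩
  rw [lintegral_map hF measurable_swap, ← setLIntegral_univ, ← setLIntegral_univ F,
    ← univ_prod_univ, setLIntegral_prod_gagliardoMeasure σ .univ .univ hF,
    setLIntegral_prod_gagliardoMeasure σ .univ .univ (F := fun z ↦ F z.swap)
      (hF.comp measurable_swap),
    lintegral_lintegral_swap (by fun_prop)]
  simp only [gagliardoKernel_comm, Prod.swap_prod_mk]

theorem integral_integral_div_dist_rpow (σ : ℝ) {F : E × E → ℝ}
    (hF : Integrable F (gagliardoMeasure E σ)) :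
    ∫ x, ∫ y, F (x, y) / dist x y ^ (finrank ℝ E + σ) = ∫ z, F z ∂gagliardoMeasure E σ := by
  have hker : Measurable fun z : E × E ↦ ENNReal.ofReal (gagliardoKernel σ z.1 z.2) := by fun_prop
  rw [gagliardoMeasure,
    integrable_withDensity_iff_integrable_smul' hker (by simp), Measure.volume_eq_prod] at hF
  rw [gagliardoMeasure, integral_withDensity_eq_integral_toReal_smul hker (by simp),
    Measure.volume_eq_prod, integral_prod _ hF]
  simp only [div_dist_rpow_eq_mul_gagliardoKernel, smul_eq_mul,
    ENNReal.toReal_ofReal (gagliardoKernel_nonneg ..)]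

end GagliardoMeasure

section Inequalities

theorem abs_sub_rpow_le {q : ℝ} (hq : 0 ≤ q) (a b : ℝ) :
    |a - b| ^ q ≤ 2 ^ q * (|a| ^ q + |b| ^ q) := by
  have hmax : |a - b| ≤ 2 * max |a| |b| := by
    linarith [abs_sub a b, le_max_left |a| |b|, le_max_right |a| |b|]
  calc |a - b| ^ q ≤ (2 * max |a| |b|) ^ q := Real.rpow_le_rpow (abs_nonneg _) hmax hq
    _ = 2 ^ q * max |a| |b| ^ q := Real.mul_rpow zero_le_two (by positivity)
    _ ≤ 2 ^ q * (|a| ^ q + |b| ^ q) := by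
        gcongr
        obtain h | h := max_choice |a| |b| <;> rw [h]
        · exact le_add_of_nonneg_right (by positivity)
        · exact le_add_of_nonneg_left (by positivity)

@[fun_prop]
theorem measurable_sgnPow (γ : ℝ) : Measurable (sgnPow γ) := by
  unfold sgnPow
  fun_prop

theorem abs_sgnPow {γ : ℝ} (hγ : 0 < γ) (a : ℝ) : |sgnPow γ a| = |a| ^ γ := by
  rw [sgnPow, abs_mul, abs_of_nonneg (by positivity)]
  obtain rfl | ha := eq_or_ne a 0
  · rw [abs_zero, mul_zero, Real.zero_rpow hγ.ne']
  · rw [Real.rpow_sub_one (abs_ne_zero.mpr ha), div_mul_cancel₀ _ (abs_ne_zero.mpr ha)]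

-- With `α = |a|^{γ-1}` and `β = |b|^{γ-1}`, the product on the right is
-- `½(α + β)(a - b)² + ½(α - β)(a² - b²)`, whose last term is nonnegative.
theorem two_rpow_neg_mul_abs_sub_rpow_le {γ : ℝ} (hγ : 1 ≤ γ) (a b : ℝ) :
    2 ^ (-γ) * |a - b| ^ (γ + 1) ≤ (sgnPow γ a - sgnPow γ b) * (a - b) := by
  have hγ' : 0 ≤ γ - 1 := sub_nonneg.mpr hγ
  have hcross : 0 ≤ (|a| ^ (γ - 1) - |b| ^ (γ - 1)) * (a ^ 2 - b ^ 2) := by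
    obtain h | h := le_total |a| |b|
    · exact mul_nonneg_of_nonpos_of_nonpos
        (sub_nonpos.mpr (Real.rpow_le_rpow (abs_nonneg a) h hγ')) (sub_nonpos.mpr (sq_le_sq.mpr h))
    · exact mul_nonneg (sub_nonneg.mpr (Real.rpow_le_rpow (abs_nonneg b) h hγ'))
        (sub_nonneg.mpr (sq_le_sq.mpr h))
  have hsplit : |a - b| ^ (γ + 1) = |a - b| ^ (γ - 1) * (a - b) ^ 2 := by
    rw [← sq_abs (a - b), ← Real.rpow_natCast,
      ← Real.rpow_add' (abs_nonneg _) (by push_cast; linarith)]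
    push_cast
    ring_nf
  calc 2 ^ (-γ) * |a - b| ^ (γ + 1)
      ≤ 2 ^ (-γ) * (2 ^ (γ - 1) * (|a| ^ (γ - 1) + |b| ^ (γ - 1)) * (a - b) ^ 2) := by
        rw [hsplit]
        gcongr
        exact abs_sub_rpow_le hγ' a b
    _ = 2⁻¹ * (|a| ^ (γ - 1) + |b| ^ (γ - 1)) * (a - b) ^ 2 := by
        rw [Real.rpow_sub_one two_ne_zero, Real.rpow_neg zero_le_two]
        field_simp
    _ ≤ (sgnPow γ a - sgnPow γ b) * (a - b) := by
        unfold sgnPow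
        linear_combination hcross / 2

theorem abs_mul_sq_sub_mul_sq_le {a b t t' r r' : ℝ} (ht : t ∈ Icc 0 1) (ht' : t' ∈ Icc 0 1)
    (h : t - t' ≤ r) (h' : t' - t ≤ r') (hr : 0 ≤ r) (hr' : 0 ≤ r') :
    |a * t ^ 2 - b * t' ^ 2| ≤ |a - b| + 2 * (|a| * (t * r) + |b| * (t' * r')) := by
  wlog hle : t' ≤ t generalizing a b t t' r r'
  · have := this ht' ht h' h hr' hr (le_of_not_ge hle) (a := b) (b := a)
    rw [abs_sub_comm, abs_sub_comm b a] at this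
    linarith
  have hdiff : |t ^ 2 - t' ^ 2| ≤ 2 * (t * r) := by
    rw [abs_of_nonneg (sub_nonneg.mpr (pow_le_pow_left₀ ht'.1 hle 2))]
    nlinarith [ht.1, ht'.1]
  have hsq : |t' ^ 2| ≤ 1 := by
    rw [abs_of_nonneg (sq_nonneg t')]
    exact pow_le_one₀ ht'.1 ht'.2
  calc |a * t ^ 2 - b * t' ^ 2| = |(a - b) * t' ^ 2 + a * (t ^ 2 - t' ^ 2)| := by ring_nf
    _ ≤ |a - b| * |t' ^ 2| + |a| * |t ^ 2 - t' ^ 2| := by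
        exact (abs_add_le _ _).trans_eq (by rw [abs_mul, abs_mul])
    _ ≤ |a - b| * 1 + |a| * (2 * (t * r)) := by gcongr
    _ ≤ |a - b| + 2 * (|a| * (t * r) + |b| * (t' * r')) := by
        have : 0 ≤ |b| * (t' * r') := mul_nonneg (abs_nonneg b) (mul_nonneg ht'.1 hr')
        linarith

theorem le_rpow_of_le_mul_rpow_inv {p q : ℝ} (hpq : p.HolderConjugate q) {A X : ℝ≥0∞}
    (hX : X ≠ ⊤) (h : X ≤ A * X ^ p⁻¹) : X ≤ A ^ q := by
  obtain rfl | hX0 := eq_or_ne X 0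
  · exact zero_le
  have hp := hpq.inv_pos
  have hXp : X ^ p⁻¹ * X ^ q⁻¹ = X := by
    rw [← ENNReal.rpow_add _ _ hX0 hX, hpq.inv_add_inv_eq_one, ENNReal.rpow_one]
  have hroot : X ^ q⁻¹ ≤ A := by
    rw [← ENNReal.mul_le_mul_iff_right (c := A) (a := X ^ p⁻¹)]
    · rwa [hXp, mul_comm]
    · exact (ENNReal.rpow_pos (pos_iff_ne_zero.mpr hX0) hX).ne'
    · exact ENNReal.rpow_ne_top_of_nonneg hp.le hX
  exact (ENNReal.rpow_inv_le_iff hpq.symm.pos).mp hroot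

theorem le_max_one_of_le_add_mul_rpow_inv {p q : ℝ} (hpq : p.HolderConjugate q)
    {A B Y : ℝ≥0∞} (hY : Y ≠ ⊤) (h : Y ≤ A + B * Y ^ p⁻¹) : Y ≤ max 1 ((A + B) ^ q) := by
  obtain hY1 | hY1 := le_total Y 1
  · exact hY1.trans (le_max_left _ _)
  refine (le_rpow_of_le_mul_rpow_inv hpq hY ?_).trans (le_max_right _ _)
  calc Y ≤ A * 1 + B * Y ^ p⁻¹ := by rwa [mul_one]
    _ ≤ A * Y ^ p⁻¹ + B * Y ^ p⁻¹ := by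
        gcongr
        exact ENNReal.one_le_rpow hY1 hpq.inv_pos
    _ = (A + B) * Y ^ p⁻¹ := (add_mul _ _ _).symm

end Inequalities

section Cutoff

variable {E : Type*} [PseudoMetricSpace E]

/-- The distance from `x` to `y` relative to the distance from `x` to the sphere, truncated at `1`:
the modulus of continuity of `hardyCutoff`. -/
def boundaryRamp (x₀ : E) (R : ℝ) (x y : E) : ℝ := min 1 (dist x y / (R - dist x x₀))

/-- The cutoff `(1 - ε / δ)₊`, where `δ` is the distance to the complement of the ball of radius `R`
around `x₀`. As `ε → 0` it increases to the indicator of the ball, with `boundaryRamp` as a modulus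
of continuity independent of `ε`. -/
def hardyCutoff (x₀ : E) (R ε : ℝ) (x : E) : ℝ := 1 - ε / max ε (R - dist x x₀)

variable {x₀ x y : E} {R ε : ℝ}

theorem boundaryRamp_nonneg (hx : x ∈ ball x₀ R) : 0 ≤ boundaryRamp x₀ R x y :=
  le_min zero_le_one (div_nonneg dist_nonneg (sub_pos.mpr hx).le)

theorem boundaryRamp_eq_one (hx : x ∈ ball x₀ R) (hy : y ∉ ball x₀ R) :
    boundaryRamp x₀ R x y = 1 := by
  refine min_eq_left ((one_le_div (sub_pos.mpr hx)).mpr ?_)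
  rw [mem_ball, not_lt, dist_comm] at hy
  rw [dist_comm x x₀]
  linarith [dist_triangle x₀ x y]

theorem hardyCutoff_mem_Icc (hε : 0 < ε) (x : E) : hardyCutoff x₀ R ε x ∈ Icc 0 1 :=
  ⟨sub_nonneg.mpr (div_le_one_of_le₀ (le_max_left _ _) (hε.le.trans (le_max_left _ _))),
    sub_le_self _ (div_nonneg hε.le (hε.le.trans (le_max_left _ _)))⟩

theorem hardyCutoff_eq_zero (hε : 0 < ε) (hx : x ∉ closedBall x₀ (R - ε)) :
    hardyCutoff x₀ R ε x = 0 := by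
  rw [mem_closedBall, not_le] at hx
  rw [hardyCutoff, max_eq_left (by linarith), div_self hε.ne', sub_self]

theorem hardyCutoff_eq_zero_of_notMem_ball (hε : 0 < ε) (hx : x ∉ ball x₀ R) :
    hardyCutoff x₀ R ε x = 0 :=
  hardyCutoff_eq_zero hε fun h ↦ hx (closedBall_subset_ball (sub_lt_self R hε) h)

theorem hardyCutoff_sub_le_boundaryRamp (hε : 0 < ε) (hx : x ∈ ball x₀ R) (y : E) :
    hardyCutoff x₀ R ε x - hardyCutoff x₀ R ε y ≤ boundaryRamp x₀ R x y := by
  have hδx : 0 < R - dist x x₀ := sub_pos.mpr hx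
  refine le_min ?_ ?_
  · linarith [(hardyCutoff_mem_Icc (x₀ := x₀) (R := R) hε x).2,
      (hardyCutoff_mem_Icc (x₀ := x₀) (R := R) hε y).1]
  · set m := max ε (R - dist y x₀)
    have hm : 0 < m := hε.trans_le (le_max_left _ _)
    have hεm : ε / m ≤ 1 := div_le_one_of_le₀ (le_max_left _ _) hm.le
    obtain hle | hlt := le_or_gt (R - dist x x₀) ε
    · rw [hardyCutoff, max_eq_left hle, div_self hε.ne', sub_self, zero_sub]
      exact (neg_nonpos.mpr (hardyCutoff_mem_Icc hε y).1).trans (by positivity)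
    · have hdist : R - dist x x₀ - m ≤ dist x y := by
        linarith [dist_triangle_left y x₀ x, le_max_right ε (R - dist y x₀)]
      calc hardyCutoff x₀ R ε x - hardyCutoff x₀ R ε y
          = ε / m * ((R - dist x x₀ - m) / (R - dist x x₀)) := by
            rw [hardyCutoff, hardyCutoff, max_eq_right hlt.le]
            field_simp
            ring
        _ ≤ ε / m * (dist x y / (R - dist x x₀)) := by gcongr
        _ ≤ dist x y / (R - dist x x₀) := mul_le_of_le_one_left (by positivity) hεm

theorem tendsto_hardyCutoff (hx : x ∈ ball x₀ R) :
    Tendsto (fun ε ↦ hardyCutoff x₀ R ε x) (𝓝[>] 0) (𝓝 1) := by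
  have hδ : 0 < R - dist x x₀ := sub_pos.mpr hx
  have hmax : Tendsto (fun ε ↦ max ε (R - dist x x₀)) (𝓝 0) (𝓝 (R - dist x x₀)) := by
    simpa only [id, max_eq_right hδ.le] using (tendsto_id (α := ℝ) (x := 𝓝 0)).max
      (tendsto_const_nhds (x := R - dist x x₀))
  have hlim := (tendsto_const_nhds (x := (1 : ℝ))).sub (tendsto_id.div hmax hδ.ne')
  rw [zero_div, sub_zero] at hlim
  exact hlim.mono_left nhdsWithin_le_nhds

@[fun_prop]
theorem measurable_hardyCutoff [MeasurableSpace E] [OpensMeasurableSpace E] (x₀ : E) (R ε : ℝ) :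
    Measurable (hardyCutoff x₀ R ε) := by
  unfold hardyCutoff
  fun_prop

@[fun_prop]
theorem measurable_boundaryRamp [MeasurableSpace E] [OpensMeasurableSpace E]
    [SecondCountableTopology E] (x₀ : E) (R : ℝ) :
    Measurable fun z : E × E ↦ boundaryRamp x₀ R z.1 z.2 := by
  unfold boundaryRamp
  fun_prop

end Cutoff

section HardyEnergy

variable {E : Type*} [NormedAddCommGroup E] [MeasureSpace E]

/-- The truncation error `|w(x)| t(x) min(1, |x - y| / δ(x))` made when the increment of `t² w` is
compared with that of `w`, where `δ` is the distance to the complement of the ball. -/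
def cutoffError (x₀ : E) (R : ℝ) (w t : E → ℝ) (z : E × E) : ℝ :=
  |w z.1| * (t z.1 * boundaryRamp x₀ R z.1 z.2)

/-- The Hardy-type energy `∫_{B_R(x₀)} |w|^p t² δ^{-σ} dx`, where `δ` is the distance to the
complement of the ball. -/
def hardyEnergy (p σ : ℝ) (x₀ : E) (R : ℝ) (w t : E → ℝ) : ℝ≥0∞ :=
  ∫⁻ x in ball x₀ R, ‖w x‖ₑ ^ p * ‖t x‖ₑ ^ 2 * ENNReal.ofReal ((R - dist x x₀) ^ (-σ))

variable {p σ R : ℝ} {x₀ : E} {w t : E → ℝ}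

theorem hardyEnergy_hardyCutoff_le (hσ : 0 < σ) {ε : ℝ} (hε : 0 < ε) :
    hardyEnergy p σ x₀ R w (hardyCutoff x₀ R ε) ≤
      ENNReal.ofReal (ε ^ (-σ)) * ∫⁻ x in ball x₀ R, ‖w x‖ₑ ^ p := by
  rw [hardyEnergy, ← lintegral_const_mul' _ _ ENNReal.ofReal_ne_top]
  refine lintegral_mono fun x ↦ ?_
  by_cases hx : x ∈ closedBall x₀ (R - ε)
  · have hcut := hardyCutoff_mem_Icc (x₀ := x₀) (R := R) hε x
    have hsq : ‖hardyCutoff x₀ R ε x‖ₑ ^ 2 ≤ 1 := by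
      refine pow_le_one₀ zero_le ?_
      rw [Real.enorm_of_nonneg hcut.1]
      exact ENNReal.ofReal_le_one.mpr hcut.2
    have hδ : (R - dist x x₀) ^ (-σ) ≤ ε ^ (-σ) :=
      Real.rpow_le_rpow_of_nonpos hε (by linarith [mem_closedBall.mp hx]) (by linarith)
    calc ‖w x‖ₑ ^ p * ‖hardyCutoff x₀ R ε x‖ₑ ^ 2 * ENNReal.ofReal ((R - dist x x₀) ^ (-σ))
        ≤ ‖w x‖ₑ ^ p * 1 * ENNReal.ofReal (ε ^ (-σ)) := by gcongr
      _ = ENNReal.ofReal (ε ^ (-σ)) * ‖w x‖ₑ ^ p := by rw [mul_one, mul_comm]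
  · simp [hardyCutoff_eq_zero hε hx]

theorem hardyEnergy_hardyCutoff_lt_top (hp : 0 < p) (hσ : 0 < σ) (hε : 0 < ε)
    (hwp : MemLp w (ENNReal.ofReal p) (volume.restrict (ball x₀ R))) :
    hardyEnergy p σ x₀ R w (hardyCutoff x₀ R ε) < ⊤ :=
  (hardyEnergy_hardyCutoff_le hσ hε).trans_lt (ENNReal.mul_lt_top ENNReal.ofReal_lt_top
    ((memLp_ofReal_iff_lintegral_lt_top hp hwp.1).mp hwp))

variable [BorelSpace E]

theorem hardyEnergy_one_le_of_hardyCutoff_le (hw : Measurable w) {M : ℝ≥0∞}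
    (h : ∀ ε > 0, hardyEnergy p σ x₀ R w (hardyCutoff x₀ R ε) ≤ M) :
    hardyEnergy p σ x₀ R w 1 ≤ M := by
  refine lintegral_le_of_tendsto_of_eventually_le (l := 𝓝[>] (0 : ℝ))
    (F := fun ε x ↦ ‖w x‖ₑ ^ p * ‖hardyCutoff x₀ R ε x‖ₑ ^ 2 *
      ENNReal.ofReal ((R - dist x x₀) ^ (-σ))) (fun ε ↦ by fun_prop) ?_
    (eventually_mem_nhdsWithin.mono h) tendsto_const_nhds
  filter_upwards [ae_restrict_mem measurableSet_ball] with x hx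
  have hsq := ENNReal.Tendsto.pow (n := 2) (tendsto_hardyCutoff hx).enorm
  refine ENNReal.Tendsto.mul_const (ENNReal.Tendsto.const_mul hsq (.inl ?_))
    (.inr ENNReal.ofReal_ne_top)
  simp only [Pi.one_apply, enorm_one, one_pow, ne_eq, one_ne_zero, not_false_eq_true]

theorem mul_lintegral_ball_le_hardyEnergy_one (hσ : 0 < σ) :
    ENNReal.ofReal (R ^ (-σ)) * ∫⁻ x in ball x₀ R, ‖w x‖ₑ ^ p ≤ hardyEnergy p σ x₀ R w 1 := by
  rw [hardyEnergy, ← lintegral_const_mul' _ _ ENNReal.ofReal_ne_top]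
  refine setLIntegral_mono' measurableSet_ball fun x hx ↦ ?_
  have hδ : R ^ (-σ) ≤ (R - dist x x₀) ^ (-σ) :=
    Real.rpow_le_rpow_of_nonpos (sub_pos.mpr hx) (sub_le_self _ dist_nonneg) (by linarith)
  rw [Pi.one_apply, enorm_one, one_pow, mul_one, mul_comm]
  gcongr

variable [NormedSpace ℝ E] [FiniteDimensional ℝ E]

@[fun_prop]
theorem measurable_cutoffError (x₀ : E) (R : ℝ) (hw : Measurable w) (ht : Measurable t) :
    Measurable (cutoffError x₀ R w t) := by
  unfold cutoffError
  fun_prop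

variable [(volume : Measure E).IsAddHaarMeasure]

theorem lintegral_cutoffError_rpow_le (hp : 2 ≤ p) (σ : ℝ) (x₀ : E) (R : ℝ) (hw : Measurable w)
    (ht : Measurable t) (ht_mem : ∀ x, t x ∈ Icc 0 1) :
    ∫⁻ z in ball x₀ R ×ˢ univ, ‖cutoffError x₀ R w t z‖ₑ ^ p ∂gagliardoMeasure E σ ≤
      truncatedMoment E p σ * hardyEnergy p σ x₀ R w t := by
  have hp0 : 0 ≤ p := zero_le_two.trans hp
  rw [setLIntegral_prod_gagliardoMeasure σ measurableSet_ball .univ (by fun_prop), hardyEnergy,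
    ← lintegral_const_mul _ (by fun_prop)]
  refine setLIntegral_mono' measurableSet_ball fun x hx ↦ ?_
  have hpow : ‖t x‖ₑ ^ p ≤ ‖t x‖ₑ ^ 2 := by
    have hle : ‖t x‖ₑ ≤ 1 := by
      rw [Real.enorm_of_nonneg (ht_mem x).1]
      exact ENNReal.ofReal_le_one.mpr (ht_mem x).2
    rw [← ENNReal.rpow_two]
    exact ENNReal.rpow_le_rpow_of_exponent_ge hle hp
  have hmeas : Measurable fun y ↦
      ENNReal.ofReal (gagliardoKernel σ x y) * ‖boundaryRamp x₀ R x y‖ₑ ^ p :=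
    Measurable.mul ((measurable_gagliardoKernel σ).comp measurable_prodMk_left).ennreal_ofReal
      (((measurable_boundaryRamp x₀ R).comp measurable_prodMk_left).enorm.pow_const p)
  have hfactor : ∀ y, ENNReal.ofReal (gagliardoKernel σ x y) * ‖cutoffError x₀ R w t (x, y)‖ₑ ^ p =
      ‖w x‖ₑ ^ p * ‖t x‖ₑ ^ p *
        (ENNReal.ofReal (gagliardoKernel σ x y) * ‖boundaryRamp x₀ R x y‖ₑ ^ p) := fun y ↦ by
    rw [cutoffError, enorm_mul, enorm_mul, Real.enorm_abs, ENNReal.mul_rpow_of_nonneg _ _ hp0,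
      ENNReal.mul_rpow_of_nonneg _ _ hp0]
    ring
  calc ∫⁻ y in univ, ENNReal.ofReal (gagliardoKernel σ x y) * ‖cutoffError x₀ R w t (x, y)‖ₑ ^ p
      = ‖w x‖ₑ ^ p * ‖t x‖ₑ ^ p *
          (ENNReal.ofReal ((R - dist x x₀) ^ (-σ)) * truncatedMoment E p σ) := by
        rw [← lintegral_gagliardoKernel_mul_min_dist_div p σ x (sub_pos.mpr hx),
          setLIntegral_univ, lintegral_congr hfactor, lintegral_const_mul _ hmeas]
        rfl
    _ ≤ ‖w x‖ₑ ^ p * ‖t x‖ₑ ^ 2 *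
          (ENNReal.ofReal ((R - dist x x₀) ^ (-σ)) * truncatedMoment E p σ) := by gcongr
    _ = _ := by ring

theorem exteriorConst_mul_hardyEnergy_le [Nontrivial E] (hσ : 0 < σ) (hw : Measurable w)
    (ht : Measurable t) :
    exteriorConst E σ * hardyEnergy p σ x₀ R w t ≤
      ∫⁻ z in ball x₀ R ×ˢ (ball x₀ R)ᶜ, ‖w z.1‖ₑ ^ p * ‖t z.1‖ₑ ^ 2 ∂gagliardoMeasure E σ := by
  rw [setLIntegral_prod_gagliardoMeasure σ measurableSet_ball measurableSet_ball.compl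
    (by fun_prop), hardyEnergy, ← lintegral_const_mul _ (by fun_prop)]
  refine setLIntegral_mono' measurableSet_ball fun x hx ↦ ?_
  have : Measurable (gagliardoKernel σ x) :=
    (measurable_gagliardoKernel σ).comp measurable_prodMk_left
  dsimp only
  rw [lintegral_mul_const _ (by fun_prop), mul_left_comm, mul_comm]
  gcongr
  exact exteriorConst_mul_le_lintegral_compl_ball hσ hx

end HardyEnergy

section Truncation

variable {E : Type*} [NormedAddCommGroup E]

/-- The function `w` multiplied by the square of `hardyCutoff`: a test function supported in a
smaller concentric ball. -/
def hardyTruncation (x₀ : E) (R ε : ℝ) (w : E → ℝ) (x : E) : ℝ := w x * hardyCutoff x₀ R ε x ^ 2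

/-- A pointwise bound on `B_R × B_R` for the increment of `t² w`. -/
def incrMajorant (x₀ : E) (R : ℝ) (w t : E → ℝ) (z : E × E) : ℝ :=
  |incr w z| + 2 * (cutoffError x₀ R w t z + cutoffError x₀ R w t z.swap)

variable {p σ R ε : ℝ} {x₀ : E} {w t : E → ℝ}

theorem hardyTruncation_eq_zero (hε : 0 < ε) {x : E} (hx : x ∉ closedBall x₀ (R - ε)) :
    hardyTruncation x₀ R ε w x = 0 := by
  rw [hardyTruncation, hardyCutoff_eq_zero hε hx, zero_pow two_ne_zero, mul_zero]

theorem hardyTruncation_eq_zero_of_notMem_ball (hε : 0 < ε) {x : E} (hx : x ∉ ball x₀ R) :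
    hardyTruncation x₀ R ε w x = 0 :=
  hardyTruncation_eq_zero hε fun h ↦ hx (closedBall_subset_ball (sub_lt_self R hε) h)

theorem abs_hardyTruncation_le (hε : 0 < ε) (x : E) : |hardyTruncation x₀ R ε w x| ≤ |w x| := by
  have hψ := hardyCutoff_mem_Icc (x₀ := x₀) (R := R) hε x
  rw [hardyTruncation, abs_mul, abs_of_nonneg (sq_nonneg (hardyCutoff x₀ R ε x))]
  exact mul_le_of_le_one_right (abs_nonneg _) (pow_le_one₀ hψ.1 hψ.2)

theorem abs_incr_hardyTruncation_le (hε : 0 < ε) {z : E × E} (hz : z ∈ ball x₀ R ×ˢ ball x₀ R) :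
    |incr (hardyTruncation x₀ R ε w) z| ≤ incrMajorant x₀ R w (hardyCutoff x₀ R ε) z :=
  abs_mul_sq_sub_mul_sq_le (hardyCutoff_mem_Icc hε _) (hardyCutoff_mem_Icc hε _)
    (hardyCutoff_sub_le_boundaryRamp hε hz.1 _) (hardyCutoff_sub_le_boundaryRamp hε hz.2 _)
    (boundaryRamp_nonneg hz.1) (boundaryRamp_nonneg hz.2)

theorem abs_incr_hardyTruncation_le_cutoffError (hε : 0 < ε) {z : E × E}
    (hz : z ∈ ball x₀ R ×ˢ (ball x₀ R)ᶜ) :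
    |incr (hardyTruncation x₀ R ε w) z| ≤ cutoffError x₀ R w (hardyCutoff x₀ R ε) z := by
  have hψ := hardyCutoff_mem_Icc (x₀ := x₀) (R := R) hε z.1
  rw [incr, hardyTruncation_eq_zero_of_notMem_ball hε hz.2, sub_zero, cutoffError,
    boundaryRamp_eq_one hz.1 hz.2, mul_one, hardyTruncation, abs_mul, abs_pow, abs_of_nonneg hψ.1]
  gcongr
  exact pow_le_of_le_one hψ.1 hψ.2 two_ne_zero

theorem cutoffError_hardyCutoff_le (hε : 0 < ε) {z : E × E} (hz : z.1 ∈ ball x₀ R) :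
    cutoffError x₀ R w (hardyCutoff x₀ R ε) z ≤ cutoffError x₀ R w 1 z := by
  have hramp := boundaryRamp_nonneg (y := z.2) hz
  unfold cutoffError
  gcongr
  exact (hardyCutoff_mem_Icc hε _).2

theorem incrMajorant_hardyCutoff_le (hε : 0 < ε) {z : E × E} (hz : z ∈ ball x₀ R ×ˢ ball x₀ R) :
    incrMajorant x₀ R w (hardyCutoff x₀ R ε) z ≤ incrMajorant x₀ R w 1 z := by
  unfold incrMajorant
  gcongr
  exacts [cutoffError_hardyCutoff_le hε hz.1, cutoffError_hardyCutoff_le hε hz.2]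

theorem tendsto_hardyTruncation {x : E} (hx : x ∈ ball x₀ R) :
    Tendsto (fun ε ↦ hardyTruncation x₀ R ε w x) (𝓝[>] 0) (𝓝 (w x)) := by
  simpa only [hardyTruncation, one_pow, mul_one] using
    ((tendsto_hardyCutoff hx).pow 2).const_mul (w x)

variable [MeasureSpace E] [BorelSpace E]

@[fun_prop]
theorem measurable_hardyTruncation (x₀ : E) (R ε : ℝ) (hw : Measurable w) :
    Measurable (hardyTruncation x₀ R ε w) := by
  unfold hardyTruncation
  fun_prop

theorem memLp_hardyTruncation (hε : 0 < ε) {q : ℝ≥0∞} (hw : Measurable w)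
    (hwq : MemLp w q (volume.restrict (ball x₀ R))) : MemLp (hardyTruncation x₀ R ε w) q := by
  have hmem : MemLp (hardyTruncation x₀ R ε w) q (volume.restrict (ball x₀ R)) :=
    hwq.of_le (by fun_prop) (.of_forall (abs_hardyTruncation_le hε))
  rw [← memLp_indicator_iff_restrict measurableSet_ball] at hmem
  rwa [indicator_eq_self.mpr] at hmem
  exact fun x hx ↦ not_not.mp fun h ↦ hx (hardyTruncation_eq_zero_of_notMem_ball hε h)

variable [NormedSpace ℝ E] [FiniteDimensional ℝ E]

@[fun_prop]
theorem measurable_incrMajorant (x₀ : E) (R : ℝ) (hw : Measurable w) (ht : Measurable t) :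
    Measurable (incrMajorant x₀ R w t) := by
  unfold incrMajorant
  have := (measurable_cutoffError x₀ R hw ht).comp measurable_swap
  fun_prop

variable [(volume : Measure E).IsAddHaarMeasure]

theorem eLpNorm_cutoffError_le (hp : 2 ≤ p) (σ : ℝ) (x₀ : E) (R : ℝ) (hw : Measurable w)
    (ht : Measurable t) (ht_mem : ∀ x, t x ∈ Icc 0 1) :
    eLpNorm (cutoffError x₀ R w t) (ENNReal.ofReal p)
        ((gagliardoMeasure E σ).restrict (ball x₀ R ×ˢ univ)) ≤
      (truncatedMoment E p σ * hardyEnergy p σ x₀ R w t) ^ p⁻¹ := by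
  rw [eLpNorm_ofReal_eq_lintegral_rpow (by linarith)]
  have := lintegral_cutoffError_rpow_le hp σ x₀ R hw ht ht_mem
  gcongr

theorem eLpNorm_incrMajorant_le (hp : 2 ≤ p) (σ : ℝ) (x₀ : E) (R : ℝ) (hw : Measurable w)
    (ht : Measurable t) (ht_mem : ∀ x, t x ∈ Icc 0 1) :
    eLpNorm (incrMajorant x₀ R w t) (ENNReal.ofReal p)
        ((gagliardoMeasure E σ).restrict (ball x₀ R ×ˢ ball x₀ R)) ≤
      eLpNorm (incr w) (ENNReal.ofReal p)
          ((gagliardoMeasure E σ).restrict (ball x₀ R ×ˢ ball x₀ R)) +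
        4 * (truncatedMoment E p σ * hardyEnergy p σ x₀ R w t) ^ p⁻¹ := by
  set ν := (gagliardoMeasure E σ).restrict (ball x₀ R ×ˢ ball x₀ R)
  set W := cutoffError x₀ R w t
  have hp1 : 1 ≤ ENNReal.ofReal p := ENNReal.one_le_ofReal.mpr (by linarith)
  have hWm : Measurable W := measurable_cutoffError x₀ R hw ht
  have hW : eLpNorm W (ENNReal.ofReal p) ν ≤
      (truncatedMoment E p σ * hardyEnergy p σ x₀ R w t) ^ p⁻¹ :=
    (eLpNorm_mono_measure _ (Measure.restrict_mono (prod_mono_right (subset_univ _)) le_rfl)).trans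
      (eLpNorm_cutoffError_le hp σ x₀ R hw ht ht_mem)
  have hswap : MeasurePreserving Prod.swap ν ν := by
    have := (measurePreserving_swap_gagliardoMeasure (E := E) σ).restrict_preimage
      (measurableSet_ball.prod measurableSet_ball : MeasurableSet (ball x₀ R ×ˢ ball x₀ R))
    rwa [preimage_swap_prod] at this
  have hWs : eLpNorm (W ∘ Prod.swap) (ENNReal.ofReal p) ν = eLpNorm W (ENNReal.ofReal p) ν :=
    eLpNorm_comp_measurePreserving hWm.aestronglyMeasurable hswap
  calc eLpNorm (incrMajorant x₀ R w t) (ENNReal.ofReal p) ν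
      = eLpNorm ((fun z ↦ ‖incr w z‖) + (2 : ℝ) • (W + W ∘ Prod.swap)) (ENNReal.ofReal p) ν := rfl
    _ ≤ eLpNorm (incr w) (ENNReal.ofReal p) ν + 2 *
          (eLpNorm W (ENNReal.ofReal p) ν + eLpNorm (W ∘ Prod.swap) (ENNReal.ofReal p) ν) := by
        refine (eLpNorm_add_le (by fun_prop) ((hWm.add (hWm.comp measurable_swap)).const_smul
          (2 : ℝ)).aestronglyMeasurable hp1).trans ?_
        rw [eLpNorm_norm, eLpNorm_const_smul, Real.enorm_of_nonneg zero_le_two,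
          ENNReal.ofReal_ofNat]
        gcongr
        exact eLpNorm_add_le hWm.aestronglyMeasurable
          (hWm.comp measurable_swap).aestronglyMeasurable hp1
    _ ≤ _ := by
        rw [hWs, ← two_mul, ← mul_assoc, show (2 : ℝ≥0∞) * 2 = 4 by norm_num]
        gcongr

variable [Nontrivial E]

theorem memLp_cutoffError (hp : 2 ≤ p) (hσ : 0 < σ) (hσp : σ < p) (hw : Measurable w)
    (ht : Measurable t) (ht_mem : ∀ x, t x ∈ Icc 0 1) (hfin : hardyEnergy p σ x₀ R w t < ⊤) :
    MemLp (cutoffError x₀ R w t) (ENNReal.ofReal p)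
      ((gagliardoMeasure E σ).restrict (ball x₀ R ×ˢ univ)) := by
  refine ⟨(measurable_cutoffError x₀ R hw ht).aestronglyMeasurable,
    (eLpNorm_cutoffError_le hp σ x₀ R hw ht ht_mem).trans_lt ?_⟩
  exact ENNReal.rpow_lt_top_of_nonneg (inv_nonneg.mpr (by linarith))
    (ENNReal.mul_ne_top (truncatedMoment_lt_top hσ hσp).ne hfin.ne)

theorem memLp_incrMajorant (hp : 2 ≤ p) (hσ : 0 < σ) (hσp : σ < p) (hw : Measurable w)
    (hDw : MemLp (incr w) (ENNReal.ofReal p)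
      ((gagliardoMeasure E σ).restrict (ball x₀ R ×ˢ ball x₀ R)))
    (ht : Measurable t) (ht_mem : ∀ x, t x ∈ Icc 0 1) (hfin : hardyEnergy p σ x₀ R w t < ⊤) :
    MemLp (incrMajorant x₀ R w t) (ENNReal.ofReal p)
      ((gagliardoMeasure E σ).restrict (ball x₀ R ×ˢ ball x₀ R)) := by
  refine ⟨(measurable_incrMajorant x₀ R hw ht).aestronglyMeasurable,
    (eLpNorm_incrMajorant_le hp σ x₀ R hw ht ht_mem).trans_lt ?_⟩
  refine ENNReal.add_lt_top.mpr ⟨hDw.2, ENNReal.mul_lt_top (by simp) ?_⟩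
  exact ENNReal.rpow_lt_top_of_nonneg (inv_nonneg.mpr (by linarith))
    (ENNReal.mul_ne_top (truncatedMoment_lt_top hσ hσp).ne hfin.ne)

theorem memLp_incr_hardyTruncation (hp : 2 ≤ p) (hσ : 0 < σ) (hσp : σ < p) (hε : 0 < ε)
    (hw : Measurable w) (hwp : MemLp w (ENNReal.ofReal p) (volume.restrict (ball x₀ R)))
    (hDw : MemLp (incr w) (ENNReal.ofReal p)
      ((gagliardoMeasure E σ).restrict (ball x₀ R ×ˢ ball x₀ R))) :
    MemLp (incr (hardyTruncation x₀ R ε w)) (ENNReal.ofReal p) (gagliardoMeasure E σ) := by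
  have hB : MeasurableSet (ball x₀ R) := measurableSet_ball
  have hψ : Measurable (hardyCutoff x₀ R ε) := measurable_hardyCutoff x₀ R ε
  have hfin := hardyEnergy_hardyCutoff_lt_top (by linarith) hσ hε hwp
  have hφm : Measurable (incr (hardyTruncation x₀ R ε w)) := by fun_prop
  have hin : MemLp (incr (hardyTruncation x₀ R ε w)) (ENNReal.ofReal p)
      ((gagliardoMeasure E σ).restrict (ball x₀ R ×ˢ ball x₀ R)) :=
    (memLp_incrMajorant hp hσ hσp hw hDw hψ (hardyCutoff_mem_Icc hε) hfin).mono'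
      hφm.aestronglyMeasurable
      ((ae_restrict_mem (hB.prod hB)).mono fun z hz ↦ abs_incr_hardyTruncation_le hε hz)
  have hout : MemLp (incr (hardyTruncation x₀ R ε w)) (ENNReal.ofReal p)
      ((gagliardoMeasure E σ).restrict (ball x₀ R ×ˢ (ball x₀ R)ᶜ)) :=
    ((memLp_cutoffError hp hσ hσp hw hψ (hardyCutoff_mem_Icc hε) hfin).mono_measure
      (Measure.restrict_mono (prod_mono_right (subset_univ _)) le_rfl)).mono'
      hφm.aestronglyMeasurable ((ae_restrict_mem (hB.prod hB.compl)).mono fun z hz ↦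
        abs_incr_hardyTruncation_le_cutoffError hε hz)
  refine memLp_of_norm_swap_eq (measurePreserving_swap_gagliardoMeasure σ) hB (norm_incr_swap _)
    hφm (.of_forall fun z h₁ h₂ ↦ ?_) ?_
  · rw [incr, hardyTruncation_eq_zero_of_notMem_ball hε h₁,
      hardyTruncation_eq_zero_of_notMem_ball hε h₂, sub_zero]
  · rw [← union_compl_self (ball x₀ R), prod_union]
    exact memLp_restrict_union (hB.prod hB) (hB.prod hB.compl) hin hout

end Truncation

section Form

theorem memLp_sgnPow {α : Type*} [MeasurableSpace α] {μ : Measure α} {g : α → ℝ} {p : ℝ}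
    (hp : 1 < p) (hg : MemLp g (ENNReal.ofReal p) μ) :
    MemLp (fun z ↦ sgnPow (p - 1) (g z)) (ENNReal.ofReal (p / (p - 1))) μ := by
  have hp1 : 0 < p - 1 := sub_pos.mpr hp
  have hpow := hg.norm_rpow_div (ENNReal.ofReal (p - 1))
  rw [← ENNReal.ofReal_div_of_pos hp1, ENNReal.toReal_ofReal hp1.le] at hpow
  refine hpow.of_le ((measurable_sgnPow _).comp_aemeasurable hg.1.aemeasurable).aestronglyMeasurable
    (.of_forall fun z ↦ ?_)
  rw [Real.norm_eq_abs, abs_sgnPow hp1]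
  exact Real.le_norm_self _

theorem holderConjugate_ofReal_div_sub_one {p : ℝ} (hp : 1 < p) :
    (ENNReal.ofReal (p / (p - 1))).HolderConjugate (ENNReal.ofReal p) :=
  (Real.HolderConjugate.conjExponent hp).symm.ennrealOfReal

variable {E : Type*} [NormedAddCommGroup E] [NormedSpace ℝ E] [MeasureSpace E]

/-- Measurable functions in `W^{s,p}(D)`, `σ = sp`, with finite tail
`∫ |u|^{p-1} (1 + |x|)^{-(d + σ)} dx`. -/
structure MemTailSobolev (p σ : ℝ) (D : Set E) (u : E → ℝ) : Prop where
  measurable : Measurable u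
  memLp : MemLp u (ENNReal.ofReal p) (volume.restrict D)
  memLp_incr : MemLp (incr u) (ENNReal.ofReal p) ((gagliardoMeasure E σ).restrict (D ×ˢ D))
  integrable_tail : Integrable fun y ↦ |u y| ^ (p - 1) * (1 + ‖y‖) ^ (-(finrank ℝ E + σ))

variable [FiniteDimensional ℝ E] [BorelSpace E] {p σ : ℝ} {u φ : E → ℝ} {x₀ : E} {r R : ℝ}

theorem integrableOn_gagliardoMeasure_of_le {S T : Set E} (hS : MeasurableSet S)
    (hT : MeasurableSet T) {G H : E × E → ℝ} (hG : Measurable G)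
    (hH : IntegrableOn H (S ×ˢ T))
    (hle : ∀ x ∈ S, ∀ y ∈ T, gagliardoKernel σ x y * |G (x, y)| ≤ H (x, y)) :
    IntegrableOn G (S ×ˢ T) (gagliardoMeasure E σ) := by
  have hker : Measurable fun z : E × E ↦ ENNReal.ofReal (gagliardoKernel σ z.1 z.2) := by fun_prop
  rw [IntegrableOn, gagliardoMeasure, restrict_withDensity (hS.prod hT),
    integrable_withDensity_iff_integrable_smul' hker (by simp)]
  refine hH.mono' (by fun_prop) ((ae_restrict_mem (hS.prod hT)).mono fun z hz ↦ ?_)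
  rw [norm_smul, ENNReal.toReal_ofReal (gagliardoKernel_nonneg ..),
    Real.norm_of_nonneg (gagliardoKernel_nonneg ..)]
  exact hle z.1 hz.1 z.2 hz.2

variable [(volume : Measure E).IsAddHaarMeasure]

theorem integrableOn_sgnPow_incr_mul_incr_exterior (hp : 1 < p) (hσ : 0 < σ)
    (hrR : r < R) (hu : MemTailSobolev p σ (ball x₀ R) u) (hφ : Measurable φ)
    (hφp : MemLp φ (ENNReal.ofReal p)) (hφ0 : ∀ x ∉ closedBall x₀ r, φ x = 0) :
    IntegrableOn (fun z ↦ sgnPow (p - 1) (incr u z) * incr φ z)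
      (closedBall x₀ r ×ˢ (ball x₀ R)ᶜ) (gagliardoMeasure E σ) := by
  have hp1 : 0 < p - 1 := sub_pos.mpr hp
  have hum := hu.measurable
  set ω : E → ℝ := fun y ↦ (1 + ‖y‖) ^ (-(finrank ℝ E + σ))
  obtain ⟨M, hM⟩ := exists_gagliardoKernel_le_one_add_norm hσ x₀ hrR
  have hω : Integrable ω := integrable_one_add_norm (by linarith)
  have hφ1 : IntegrableOn (fun x ↦ |φ x|) (closedBall x₀ r) := by
    have : Fact (volume (closedBall x₀ r) < ⊤) := ⟨measure_closedBall_lt_top⟩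
    exact (hφp.restrict _).integrable (ENNReal.one_le_ofReal.mpr hp.le) |>.abs
  have huφ : IntegrableOn (fun x ↦ |u x| ^ (p - 1) * |φ x|) (closedBall x₀ r) := by
    have := holderConjugate_ofReal_div_sub_one hp
    have hprod := ((memLp_sgnPow hp hu.memLp).integrable_mul (hφp.restrict _)).abs
    refine (IntegrableOn.mono_set hprod (closedBall_subset_ball hrR)).congr (.of_forall fun x ↦ ?_)
    simp only [Pi.mul_apply, abs_mul, abs_sgnPow hp1]
  have hH : Integrable (fun z : E × E ↦ M * 2 ^ (p - 1) *
      (|u z.1| ^ (p - 1) * |φ z.1| * ω z.2 + |φ z.1| * (|u z.2| ^ (p - 1) * ω z.2)))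
      (volume.restrict (closedBall x₀ r ×ˢ (ball x₀ R)ᶜ)) := by
    rw [Measure.volume_eq_prod, ← Measure.prod_restrict]
    exact ((huφ.mul_prod hω.integrableOn).add
      (hφ1.mul_prod hu.integrable_tail.integrableOn)).const_mul _
  refine integrableOn_gagliardoMeasure_of_le measurableSet_closedBall measurableSet_ball.compl
    (((measurable_sgnPow _).comp (measurable_incr hum)).mul (measurable_incr hφ)) hH
    fun x hx y hy ↦ ?_
  have hφy : φ y = 0 := hφ0 y fun h ↦ hy (closedBall_subset_ball hrR h)
  calc gagliardoKernel σ x y * |sgnPow (p - 1) (incr u (x, y)) * incr φ (x, y)|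
      = gagliardoKernel σ x y * (|u x - u y| ^ (p - 1) * |φ x|) := by
        rw [abs_mul, abs_sgnPow hp1, incr, incr, hφy, sub_zero]
    _ ≤ M * ω y * (2 ^ (p - 1) * (|u x| ^ (p - 1) + |u y| ^ (p - 1)) * |φ x|) := by
        gcongr
        · exact (gagliardoKernel_nonneg σ x y).trans (hM x hx y hy)
        · exact hM x hx y hy
        · exact abs_sub_rpow_le hp1.le _ _
    _ = _ := by ring

theorem integrable_sgnPow_incr_mul_incr (hp : 1 < p) (hσ : 0 < σ) (hrR : r < R)
    (hu : MemTailSobolev p σ (ball x₀ R) u) (hφ : Measurable φ) (hφp : MemLp φ (ENNReal.ofReal p))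
    (hDφ : MemLp (incr φ) (ENNReal.ofReal p) (gagliardoMeasure E σ))
    (hφ0 : ∀ x ∉ closedBall x₀ r, φ x = 0) :
    Integrable (fun z ↦ sgnPow (p - 1) (incr u z) * incr φ z) (gagliardoMeasure E σ) := by
  have hK : MeasurableSet (closedBall x₀ r) := measurableSet_closedBall
  have hum := hu.measurable
  have hin : IntegrableOn (fun z ↦ sgnPow (p - 1) (incr u z) * incr φ z)
      (closedBall x₀ r ×ˢ ball x₀ R) (gagliardoMeasure E σ) := by
    have := holderConjugate_ofReal_div_sub_one hp
    have hprod := (memLp_sgnPow hp hu.memLp_incr).integrable_mul (hDφ.restrict _)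
    exact IntegrableOn.mono_set hprod (prod_mono_left (closedBall_subset_ball hrR))
  have hout := integrableOn_sgnPow_incr_mul_incr_exterior hp hσ hrR hu hφ hφp hφ0
  rw [← memLp_one_iff_integrable]
  refine memLp_of_norm_swap_eq (measurePreserving_swap_gagliardoMeasure σ) hK (fun z ↦ ?_)
    (by fun_prop) (.of_forall fun z h₁ h₂ ↦ ?_) ?_
  · have hsgn (a : ℝ) : ‖sgnPow (p - 1) a‖ = ‖a‖ ^ (p - 1) := abs_sgnPow (sub_pos.mpr hp) a
    simp only [norm_mul, hsgn, norm_incr_swap]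
  · rw [incr, incr, hφ0 _ h₁, hφ0 _ h₂, sub_zero, mul_zero]
  · rw [← union_compl_self (ball x₀ R), prod_union, memLp_one_iff_integrable]
    exact hin.union hout

end Form

section ComparisonPair

/-- The difference of the nonlinear fluxes `|Du|^{p-2} Du` of `u` and `v`, `Du` being the
increment. -/
def fluxGap {E : Type*} (p : ℝ) (u v : E → ℝ) (z : E × E) : ℝ :=
  sgnPow (p - 1) (incr u z) - sgnPow (p - 1) (incr v z)

theorem two_rpow_neg_mul_abs_incr_sub_rpow_le {E : Type*} {p : ℝ} (hp : 2 ≤ p) (u v : E → ℝ)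
    (z : E × E) :
    2 ^ (-(p - 1)) * |incr (u - v) z| ^ p ≤ fluxGap p u v z * incr (u - v) z := by
  have hincr : incr (u - v) z = incr u z - incr v z := sub_sub_sub_comm ..
  have := two_rpow_neg_mul_abs_sub_rpow_le (γ := p - 1) (by linarith) (incr u z) (incr v z)
  rwa [sub_add_cancel, ← hincr] at this

theorem fluxGap_mul_incr_nonneg {E : Type*} {p : ℝ} (hp : 2 ≤ p) (u v : E → ℝ) (z : E × E) :
    0 ≤ fluxGap p u v z * incr (u - v) z :=
  le_trans (by positivity) (two_rpow_neg_mul_abs_incr_sub_rpow_le hp u v z)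

variable {E : Type*} [NormedAddCommGroup E] [NormedSpace ℝ E] [MeasureSpace E]

/-- The data of the comparison estimate on the ball `B_R(x₀)`: `u` and `v` agree outside the ball,
and the difference of their fluxes is driven by `f`, as tested with functions supported in smaller
concentric balls. -/
structure IsComparisonPair (p σ : ℝ) (x₀ : E) (R : ℝ) (f u v : E → ℝ) : Prop where
  left : MemTailSobolev p σ (ball x₀ R) u
  right : MemTailSobolev p σ (ball x₀ R) v
  memLp_source : MemLp f (ENNReal.ofReal (p / (p - 1))) (volume.restrict (ball x₀ R))
  ae_eq : ∀ᵐ x, x ∉ ball x₀ R → v x = u x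
  weak : ∀ φ : E → ℝ, Measurable φ → MemLp φ (ENNReal.ofReal p) →
    MemLp (incr φ) (ENNReal.ofReal p) (gagliardoMeasure E σ) →
    (∃ r < R, ∀ x ∉ closedBall x₀ r, φ x = 0) →
    ∫ z, fluxGap p u v z * incr φ z ∂gagliardoMeasure E σ = ∫ x in ball x₀ R, f x * φ x

namespace IsComparisonPair

variable {p σ R ε : ℝ} {x₀ : E} {f u v : E → ℝ}

theorem measurable_sub (h : IsComparisonPair p σ x₀ R f u v) : Measurable (u - v) :=
  h.left.measurable.sub h.right.measurable

theorem measurable_fluxGap (h : IsComparisonPair p σ x₀ R f u v) :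
    Measurable (fluxGap p u v) := by
  have hu := h.left.measurable
  have hv := h.right.measurable
  unfold fluxGap
  fun_prop

theorem memLp_sub (h : IsComparisonPair p σ x₀ R f u v) :
    MemLp (u - v) (ENNReal.ofReal p) (volume.restrict (ball x₀ R)) :=
  h.left.memLp.sub h.right.memLp

theorem memLp_incr_sub (h : IsComparisonPair p σ x₀ R f u v) :
    MemLp (incr (u - v)) (ENNReal.ofReal p)
      ((gagliardoMeasure E σ).restrict (ball x₀ R ×ˢ ball x₀ R)) :=
  (h.left.memLp_incr.sub h.right.memLp_incr).ae_eq
    (.of_forall fun _ ↦ (sub_sub_sub_comm ..).symm)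

theorem memLp_fluxGap (hp : 1 < p) (h : IsComparisonPair p σ x₀ R f u v) :
    MemLp (fluxGap p u v) (ENNReal.ofReal (p / (p - 1)))
      ((gagliardoMeasure E σ).restrict (ball x₀ R ×ˢ ball x₀ R)) :=
  (memLp_sgnPow hp h.left.memLp_incr).sub (memLp_sgnPow hp h.right.memLp_incr)

theorem integrable_source_mul_sub (hp : 1 < p) (h : IsComparisonPair p σ x₀ R f u v) :
    IntegrableOn (fun x ↦ f x * (u - v) x) (ball x₀ R) :=
  have := holderConjugate_ofReal_div_sub_one hp
  h.memLp_source.integrable_mul h.memLp_sub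

theorem ofReal_integral_source_mul_sub_le (hp : 1 < p) (h : IsComparisonPair p σ x₀ R f u v) :
    ENNReal.ofReal (∫ x in ball x₀ R, |f x * (u - v) x|) ≤
      (∫⁻ x in ball x₀ R, ‖f x‖ₑ ^ (p / (p - 1))) ^ (p / (p - 1))⁻¹ *
        (∫⁻ x in ball x₀ R, ‖(u - v) x‖ₑ ^ p) ^ p⁻¹ := by
  have := holderConjugate_ofReal_div_sub_one hp
  rw [← eLpNorm_ofReal_eq_lintegral_rpow (div_pos (by linarith) (by linarith)),
    ← eLpNorm_ofReal_eq_lintegral_rpow (by linarith)]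
  calc ENNReal.ofReal (∫ x in ball x₀ R, |f x * (u - v) x|)
      = ∫⁻ x in ball x₀ R, ‖f x * (u - v) x‖ₑ :=
        ofReal_integral_norm_eq_lintegral_enorm (h.integrable_source_mul_sub hp)
    _ ≤ _ := lintegral_enorm_mul_le_eLpNorm_mul_eLpNorm h.memLp_source.1 h.memLp_sub.1

theorem ae_sub_eq_zero (h : IsComparisonPair p σ x₀ R f u v) :
    ∀ᵐ x, x ∉ ball x₀ R → (u - v) x = 0 :=
  h.ae_eq.mono fun _ hx hxB ↦ sub_eq_zero.mpr (hx hxB).symm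

theorem ae_incr_hardyTruncation_eq (hε : 0 < ε) (h : IsComparisonPair p σ x₀ R f u v) :
    ∀ᵐ z ∂gagliardoMeasure E σ, z ∉ ball x₀ R ×ˢ ball x₀ R →
      incr (hardyTruncation x₀ R ε (u - v)) z =
        (hardyCutoff x₀ R ε z.1 ^ 2 + hardyCutoff x₀ R ε z.2 ^ 2) * incr (u - v) z := by
  filter_upwards [ae_fst_and_snd_gagliardoMeasure σ h.ae_sub_eq_zero] with z ⟨h₁, h₂⟩ hz
  simp only [incr, hardyTruncation]
  rw [mem_prod, not_and_or] at hz
  obtain hz | hz := hz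
  · rw [h₁ hz, hardyCutoff_eq_zero_of_notMem_ball hε hz]
    ring
  · rw [h₂ hz, hardyCutoff_eq_zero_of_notMem_ball hε hz]
    ring

theorem ae_tendsto_incr_hardyTruncation (h : IsComparisonPair p σ x₀ R f u v) :
    ∀ᵐ z ∂gagliardoMeasure E σ,
      Tendsto (fun ε ↦ incr (hardyTruncation x₀ R ε (u - v)) z) (𝓝[>] 0) (𝓝 (incr (u - v) z)) := by
  have hlim : ∀ᵐ x, Tendsto (fun ε ↦ hardyTruncation x₀ R ε (u - v) x) (𝓝[>] 0)
      (𝓝 ((u - v) x)) := by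
    filter_upwards [h.ae_sub_eq_zero] with x hx
    by_cases hxB : x ∈ ball x₀ R
    · exact tendsto_hardyTruncation hxB
    · simp only [hardyTruncation, hx hxB, zero_mul, tendsto_const_nhds]
  filter_upwards [ae_fst_and_snd_gagliardoMeasure σ hlim] with z hz using hz.1.sub hz.2

variable [BorelSpace E]

theorem ae_compl_fluxGap_mul_incr_hardyTruncation_nonneg (hp : 2 ≤ p) (hε : 0 < ε)
    (h : IsComparisonPair p σ x₀ R f u v) :
    ∀ᵐ z ∂(gagliardoMeasure E σ).restrict (ball x₀ R ×ˢ ball x₀ R)ᶜ,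
      0 ≤ fluxGap p u v z * incr (hardyTruncation x₀ R ε (u - v)) z := by
  refine (ae_restrict_iff' (measurableSet_ball.prod measurableSet_ball).compl).mpr
    ((h.ae_incr_hardyTruncation_eq hε).mono fun z hz hzS ↦ ?_)
  rw [hz hzS, mul_left_comm]
  exact mul_nonneg (by positivity) (fluxGap_mul_incr_nonneg hp u v z)

variable [FiniteDimensional ℝ E] [(volume : Measure E).IsAddHaarMeasure] [Nontrivial E]

theorem integrable_fluxGap_mul_incr_hardyTruncation (hp : 2 ≤ p) (hσ : 0 < σ) (hσp : σ < p)
    (hε : 0 < ε) (h : IsComparisonPair p σ x₀ R f u v) :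
    Integrable (fun z ↦ fluxGap p u v z * incr (hardyTruncation x₀ R ε (u - v)) z)
      (gagliardoMeasure E σ) := by
  have hφ := measurable_hardyTruncation x₀ R ε h.measurable_sub
  have hφp := memLp_hardyTruncation hε h.measurable_sub h.memLp_sub
  have hDφ := memLp_incr_hardyTruncation hp hσ hσp hε h.measurable_sub h.memLp_sub h.memLp_incr_sub
  have hpair {g : E → ℝ} (hg : MemTailSobolev p σ (ball x₀ R) g) :=
    integrable_sgnPow_incr_mul_incr (by linarith) hσ (sub_lt_self R hε) hg hφ hφp hDφ
      fun _ ↦ hardyTruncation_eq_zero hε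
  exact ((hpair h.left).sub (hpair h.right)).congr (.of_forall fun _ ↦ (sub_mul ..).symm)

theorem integral_fluxGap_mul_incr_hardyTruncation_le (hp : 2 ≤ p) (hσ : 0 < σ) (hσp : σ < p)
    (hε : 0 < ε) (h : IsComparisonPair p σ x₀ R f u v) :
    ∫ z, fluxGap p u v z * incr (hardyTruncation x₀ R ε (u - v)) z ∂gagliardoMeasure E σ ≤
      ∫ x in ball x₀ R, |f x * (u - v) x| := by
  rw [h.weak _ (measurable_hardyTruncation x₀ R ε h.measurable_sub)
    (memLp_hardyTruncation hε h.measurable_sub h.memLp_sub)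
    (memLp_incr_hardyTruncation hp hσ hσp hε h.measurable_sub h.memLp_sub h.memLp_incr_sub)
    ⟨R - ε, sub_lt_self R hε, fun _ ↦ hardyTruncation_eq_zero hε⟩]
  refine (Real.le_norm_self _).trans (norm_integral_le_of_norm_le
    (h.integrable_source_mul_sub (by linarith)).abs (.of_forall fun x ↦ ?_))
  rw [norm_mul, abs_mul]
  exact mul_le_mul_of_nonneg_left (abs_hardyTruncation_le hε x) (abs_nonneg _)

theorem setIntegral_add_setIntegral_compl_le (hp : 2 ≤ p) (hσ : 0 < σ) (hσp : σ < p)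
    (hε : 0 < ε) (h : IsComparisonPair p σ x₀ R f u v) :
    ∫ z in ball x₀ R ×ˢ ball x₀ R,
          fluxGap p u v z * incr (hardyTruncation x₀ R ε (u - v)) z ∂gagliardoMeasure E σ +
        ∫ z in (ball x₀ R ×ˢ ball x₀ R)ᶜ,
          fluxGap p u v z * incr (hardyTruncation x₀ R ε (u - v)) z ∂gagliardoMeasure E σ ≤
      ∫ x in ball x₀ R, |f x * (u - v) x| := by
  rw [integral_add_compl (measurableSet_ball.prod measurableSet_ball)
    (h.integrable_fluxGap_mul_incr_hardyTruncation hp hσ hσp hε)]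
  exact h.integral_fluxGap_mul_incr_hardyTruncation_le hp hσ hσp hε

theorem setIntegral_fluxGap_mul_incr_hardyTruncation_le (hp : 2 ≤ p) (hσ : 0 < σ) (hσp : σ < p)
    (hε : 0 < ε) (h : IsComparisonPair p σ x₀ R f u v) :
    ∫ z in ball x₀ R ×ˢ ball x₀ R,
        fluxGap p u v z * incr (hardyTruncation x₀ R ε (u - v)) z ∂gagliardoMeasure E σ ≤
      ∫ x in ball x₀ R, |f x * (u - v) x| :=
  (le_add_of_nonneg_right (integral_nonneg_of_ae
    (h.ae_compl_fluxGap_mul_incr_hardyTruncation_nonneg hp hε))).trans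
    (h.setIntegral_add_setIntegral_compl_le hp hσ hσp hε)

theorem lintegral_compl_fluxGap_mul_incr_hardyTruncation_le (hp : 2 ≤ p) (hσ : 0 < σ)
    (hσp : σ < p) (hε : 0 < ε) (h : IsComparisonPair p σ x₀ R f u v) :
    ∫⁻ z in (ball x₀ R ×ˢ ball x₀ R)ᶜ,
        ENNReal.ofReal (fluxGap p u v z * incr (hardyTruncation x₀ R ε (u - v)) z)
          ∂gagliardoMeasure E σ ≤
      ENNReal.ofReal ((∫ x in ball x₀ R, |f x * (u - v) x|) -
        ∫ z in ball x₀ R ×ˢ ball x₀ R,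
          fluxGap p u v z * incr (hardyTruncation x₀ R ε (u - v)) z ∂gagliardoMeasure E σ) := by
  rw [← ofReal_integral_eq_lintegral_ofReal
    (h.integrable_fluxGap_mul_incr_hardyTruncation hp hσ hσp hε).restrict
    (h.ae_compl_fluxGap_mul_incr_hardyTruncation_nonneg hp hε)]
  exact ENNReal.ofReal_le_ofReal
    (le_sub_iff_add_le'.mpr (h.setIntegral_add_setIntegral_compl_le hp hσ hσp hε))

end IsComparisonPair

end ComparisonPair

section EnergyEstimate

namespace IsComparisonPair

variable {E : Type*} [NormedAddCommGroup E] [NormedSpace ℝ E] [MeasureSpace E]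
variable [FiniteDimensional ℝ E] [BorelSpace E] [(volume : Measure E).IsAddHaarMeasure]
variable {p σ R ε : ℝ} {x₀ : E} {f u v : E → ℝ}

theorem ofReal_sub_setIntegral_le (hp : 2 ≤ p) (hε : 0 < ε)
    (h : IsComparisonPair p σ x₀ R f u v) :
    ENNReal.ofReal ((∫ x in ball x₀ R, |f x * (u - v) x|) -
        ∫ z in ball x₀ R ×ˢ ball x₀ R,
          fluxGap p u v z * incr (hardyTruncation x₀ R ε (u - v)) z ∂gagliardoMeasure E σ) ≤
      ENNReal.ofReal (∫ x in ball x₀ R, |f x * (u - v) x|) +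
        eLpNorm (fluxGap p u v) (ENNReal.ofReal (p / (p - 1)))
            ((gagliardoMeasure E σ).restrict (ball x₀ R ×ˢ ball x₀ R)) *
          (eLpNorm (incr (u - v)) (ENNReal.ofReal p)
              ((gagliardoMeasure E σ).restrict (ball x₀ R ×ˢ ball x₀ R)) +
            4 * (truncatedMoment E p σ *
              hardyEnergy p σ x₀ R (u - v) (hardyCutoff x₀ R ε)) ^ p⁻¹) := by
  have hS : MeasurableSet (ball x₀ R ×ˢ ball x₀ R) := measurableSet_ball.prod measurableSet_ball
  have := holderConjugate_ofReal_div_sub_one (p := p) (by linarith)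
  set ν := (gagliardoMeasure E σ).restrict (ball x₀ R ×ˢ ball x₀ R)
  set φ := hardyTruncation x₀ R ε (u - v)
  have hDφm : Measurable (incr φ) :=
    measurable_incr (measurable_hardyTruncation x₀ R ε h.measurable_sub)
  have hDφ : eLpNorm (incr φ) (ENNReal.ofReal p) ν ≤
      eLpNorm (incr (u - v)) (ENNReal.ofReal p) ν +
        4 * (truncatedMoment E p σ *
          hardyEnergy p σ x₀ R (u - v) (hardyCutoff x₀ R ε)) ^ p⁻¹ :=
    (eLpNorm_mono_ae_real ((ae_restrict_mem hS).mono fun z ↦ abs_incr_hardyTruncation_le hε)).trans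
      (eLpNorm_incrMajorant_le hp σ x₀ R h.measurable_sub (measurable_hardyCutoff x₀ R ε)
        (hardyCutoff_mem_Icc hε))
  have hneg (a b : ℝ) : ENNReal.ofReal (a - b) ≤ ENNReal.ofReal a + ‖b‖ₑ := by
    rw [sub_eq_add_neg, ← enorm_neg b]
    exact ENNReal.ofReal_add_le.trans (by gcongr; exact Real.ofReal_le_enorm _)
  refine (hneg _ _).trans (add_le_add_right ?_ _)
  calc ‖∫ z, fluxGap p u v z * incr φ z ∂ν‖ₑ
      ≤ ∫⁻ z, ‖fluxGap p u v z * incr φ z‖ₑ ∂ν := enorm_integral_le_lintegral_enorm _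
    _ ≤ eLpNorm (fluxGap p u v) (ENNReal.ofReal (p / (p - 1))) ν *
          eLpNorm (incr φ) (ENNReal.ofReal p) ν :=
        lintegral_enorm_mul_le_eLpNorm_mul_eLpNorm h.measurable_fluxGap.aestronglyMeasurable
          hDφm.aestronglyMeasurable
    _ ≤ _ := by gcongr

variable [Nontrivial E]

theorem mul_hardyEnergy_le_lintegral_compl (hp : 2 ≤ p) (hσ : 0 < σ) (hε : 0 < ε)
    (h : IsComparisonPair p σ x₀ R f u v) :
    ENNReal.ofReal (2 ^ (-(p - 1))) *
        (exteriorConst E σ * hardyEnergy p σ x₀ R (u - v) (hardyCutoff x₀ R ε)) ≤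
      ∫⁻ z in (ball x₀ R ×ˢ ball x₀ R)ᶜ,
        ENNReal.ofReal (fluxGap p u v z * incr (hardyTruncation x₀ R ε (u - v)) z)
          ∂gagliardoMeasure E σ := by
  have hB : MeasurableSet (ball x₀ R) := measurableSet_ball
  have hsub : ball x₀ R ×ˢ (ball x₀ R)ᶜ ⊆ (ball x₀ R ×ˢ ball x₀ R)ᶜ := fun z hz hzS ↦ hz.2 hzS.2
  refine (mul_le_mul_right (exteriorConst_mul_hardyEnergy_le hσ h.measurable_sub
    (measurable_hardyCutoff x₀ R ε)) _).trans (le_trans ?_ (lintegral_mono_set hsub))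
  rw [← lintegral_const_mul' _ _ ENNReal.ofReal_ne_top]
  refine lintegral_mono_ae ((ae_restrict_iff' (hB.prod hB.compl)).mpr ?_)
  filter_upwards [h.ae_incr_hardyTruncation_eq hε,
    ae_fst_and_snd_gagliardoMeasure σ h.ae_sub_eq_zero] with z hφ hw hz
  set ψ := hardyCutoff x₀ R ε
  have hDw : incr (u - v) z = (u - v) z.1 := by rw [incr, hw.2 hz.2, sub_zero]
  have hψ : ψ z.2 = 0 := hardyCutoff_eq_zero_of_notMem_ball hε hz.2
  rw [hφ (hsub hz), hψ, zero_pow two_ne_zero, add_zero, ← hDw]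
  calc ENNReal.ofReal (2 ^ (-(p - 1))) * (‖incr (u - v) z‖ₑ ^ p * ‖ψ z.1‖ₑ ^ 2)
      = ENNReal.ofReal (ψ z.1 ^ 2 * (2 ^ (-(p - 1)) * |incr (u - v) z| ^ p)) := by
        rw [Real.enorm_eq_ofReal_abs, ENNReal.ofReal_rpow_of_nonneg (abs_nonneg _) (by linarith),
          ← enorm_pow, Real.enorm_of_nonneg (sq_nonneg _), ← ENNReal.ofReal_mul (by positivity),
          ← ENNReal.ofReal_mul (by positivity), mul_comm (ψ z.1 ^ 2), mul_assoc]
    _ ≤ ENNReal.ofReal (ψ z.1 ^ 2 * (fluxGap p u v z * incr (u - v) z)) :=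
        ENNReal.ofReal_le_ofReal (mul_le_mul_of_nonneg_left
          (two_rpow_neg_mul_abs_incr_sub_rpow_le hp u v z) (sq_nonneg _))
    _ = ENNReal.ofReal (fluxGap p u v z * (ψ z.1 ^ 2 * incr (u - v) z)) := by
        rw [mul_left_comm]

theorem hardyEnergy_one_lt_top (hp : 2 ≤ p) (hσ : 0 < σ) (hσp : σ < p)
    (h : IsComparisonPair p σ x₀ R f u v) : hardyEnergy p σ x₀ R (u - v) 1 < ⊤ := by
  have hpq := Real.HolderConjugate.conjExponent (p := p) (by linarith)
  set ν := (gagliardoMeasure E σ).restrict (ball x₀ R ×ˢ ball x₀ R)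
  set c := ENNReal.ofReal (2 ^ (-(p - 1))) * exteriorConst E σ
  have hc0 : c ≠ 0 :=
    mul_ne_zero (ENNReal.ofReal_pos.mpr (by positivity)).ne' (exteriorConst_ne_zero σ)
  have hc : c ≠ ⊤ := ENNReal.mul_ne_top ENNReal.ofReal_ne_top (exteriorConst_ne_top σ)
  set F := ENNReal.ofReal (∫ x in ball x₀ R, |f x * (u - v) x|)
  set g := eLpNorm (fluxGap p u v) (ENNReal.ofReal (p / (p - 1))) ν
  have hg : g ≠ ⊤ := (h.memLp_fluxGap (by linarith)).2.ne
  set N := eLpNorm (incr (u - v)) (ENNReal.ofReal p) ν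
  set A := c⁻¹ * (F + g * N)
  set B := c⁻¹ * (g * (4 * truncatedMoment E p σ ^ p⁻¹))
  have hN : N ≠ ⊤ := h.memLp_incr_sub.2.ne
  have hM : truncatedMoment E p σ ^ p⁻¹ ≠ ⊤ :=
    ENNReal.rpow_ne_top_of_nonneg hpq.inv_nonneg (truncatedMoment_lt_top hσ hσp).ne
  have hAB : A + B ≠ ⊤ := by finiteness
  have hbound : ∀ ε > 0, hardyEnergy p σ x₀ R (u - v) (hardyCutoff x₀ R ε) ≤
      max 1 ((A + B) ^ p.conjExponent) := fun ε hε ↦ by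
    set Y := hardyEnergy p σ x₀ R (u - v) (hardyCutoff x₀ R ε)
    have hY : Y ≠ ⊤ := (hardyEnergy_hardyCutoff_lt_top (by linarith) hσ hε h.memLp_sub).ne
    have hcY : c * Y ≤ F + g * (N + 4 * (truncatedMoment E p σ * Y) ^ p⁻¹) := by
      rw [mul_assoc]
      exact ((h.mul_hardyEnergy_le_lintegral_compl hp hσ hε).trans
        (h.lintegral_compl_fluxGap_mul_incr_hardyTruncation_le hp hσ hσp hε)).trans
        (h.ofReal_sub_setIntegral_le hp hε)
    refine le_max_one_of_le_add_mul_rpow_inv hpq hY ?_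
    rw [ENNReal.mul_rpow_of_nonneg _ _ hpq.inv_nonneg] at hcY
    calc Y ≤ c⁻¹ * (F + g * (N + 4 * (truncatedMoment E p σ ^ p⁻¹ * Y ^ p⁻¹))) :=
          (ENNReal.mul_le_iff_le_inv hc0 hc).mp hcY
      _ = A + B * Y ^ p⁻¹ := by ring
  refine (hardyEnergy_one_le_of_hardyCutoff_le h.measurable_sub hbound).trans_lt ?_
  exact max_lt ENNReal.one_lt_top (ENNReal.rpow_lt_top_of_nonneg hpq.symm.nonneg hAB)

end IsComparisonPair

end EnergyEstimate

section EnergyInequality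

namespace IsComparisonPair

variable {E : Type*} [NormedAddCommGroup E] [NormedSpace ℝ E] [MeasureSpace E]
variable [FiniteDimensional ℝ E] [BorelSpace E] [(volume : Measure E).IsAddHaarMeasure]
variable [Nontrivial E] {p σ R : ℝ} {x₀ : E} {f u v : E → ℝ}

theorem integrableOn_fluxGap_mul_incrMajorant (hp : 2 ≤ p) (hσ : 0 < σ) (hσp : σ < p)
    (h : IsComparisonPair p σ x₀ R f u v) :
    IntegrableOn (fun z ↦ |fluxGap p u v z| * incrMajorant x₀ R (u - v) 1 z)
      (ball x₀ R ×ˢ ball x₀ R) (gagliardoMeasure E σ) := by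
  have := holderConjugate_ofReal_div_sub_one (p := p) (by linarith)
  exact (h.memLp_fluxGap (by linarith)).abs.integrable_mul
    (memLp_incrMajorant hp hσ hσp h.measurable_sub h.memLp_incr_sub measurable_one
      (fun _ ↦ ⟨zero_le_one, le_rfl⟩) (h.hardyEnergy_one_lt_top hp hσ hσp))

theorem tendsto_setIntegral_fluxGap_mul_incr_hardyTruncation (hp : 2 ≤ p) (hσ : 0 < σ)
    (hσp : σ < p) (h : IsComparisonPair p σ x₀ R f u v) :
    Tendsto (fun ε ↦ ∫ z in ball x₀ R ×ˢ ball x₀ R,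
        fluxGap p u v z * incr (hardyTruncation x₀ R ε (u - v)) z ∂gagliardoMeasure E σ) (𝓝[>] 0)
      (𝓝 (∫ z in ball x₀ R ×ˢ ball x₀ R,
        fluxGap p u v z * incr (u - v) z ∂gagliardoMeasure E σ)) := by
  have hS : MeasurableSet (ball x₀ R ×ˢ ball x₀ R) := measurableSet_ball.prod measurableSet_ball
  refine tendsto_integral_filter_of_dominated_convergence _ (.of_forall fun ε ↦ ?_) ?_
    (h.integrableOn_fluxGap_mul_incrMajorant hp hσ hσp) ?_
  · exact (h.measurable_fluxGap.mul (measurable_incr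
      (measurable_hardyTruncation x₀ R ε h.measurable_sub))).aestronglyMeasurable
  · filter_upwards [self_mem_nhdsWithin] with ε (hε : 0 < ε)
    filter_upwards [ae_restrict_mem hS] with z hz
    rw [Real.norm_eq_abs, abs_mul]
    exact mul_le_mul_of_nonneg_left ((abs_incr_hardyTruncation_le hε hz).trans
      (incrMajorant_hardyCutoff_le hε hz)) (abs_nonneg _)
  · exact ae_restrict_of_ae (h.ae_tendsto_incr_hardyTruncation.mono fun z hz ↦ hz.const_mul _)

theorem lintegral_compl_fluxGap_mul_incr_le (hp : 2 ≤ p) (hσ : 0 < σ) (hσp : σ < p)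
    (h : IsComparisonPair p σ x₀ R f u v) :
    ∫⁻ z in (ball x₀ R ×ˢ ball x₀ R)ᶜ,
        ENNReal.ofReal (fluxGap p u v z * incr (u - v) z) ∂gagliardoMeasure E σ ≤
      ENNReal.ofReal ((∫ x in ball x₀ R, |f x * (u - v) x|) -
        ∫ z in ball x₀ R ×ˢ ball x₀ R,
          fluxGap p u v z * incr (u - v) z ∂gagliardoMeasure E σ) := by
  refine lintegral_le_of_tendsto_of_eventually_le (l := 𝓝[>] (0 : ℝ)) (fun ε ↦ ?_) ?_
    (eventually_mem_nhdsWithin.mono fun ε hε ↦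
      h.lintegral_compl_fluxGap_mul_incr_hardyTruncation_le hp hσ hσp hε)
    (ENNReal.tendsto_ofReal
      ((h.tendsto_setIntegral_fluxGap_mul_incr_hardyTruncation hp hσ hσp).const_sub _))
  · exact (h.measurable_fluxGap.mul (measurable_incr
      (measurable_hardyTruncation x₀ R ε h.measurable_sub))).ennreal_ofReal
  · exact ae_restrict_of_ae (h.ae_tendsto_incr_hardyTruncation.mono fun z hz ↦
      ENNReal.tendsto_ofReal (hz.const_mul _))

theorem lintegral_fluxGap_mul_incr_le (hp : 2 ≤ p) (hσ : 0 < σ) (hσp : σ < p)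
    (h : IsComparisonPair p σ x₀ R f u v) :
    ∫⁻ z, ENNReal.ofReal (fluxGap p u v z * incr (u - v) z) ∂gagliardoMeasure E σ ≤
      ENNReal.ofReal (∫ x in ball x₀ R, |f x * (u - v) x|) := by
  set S := ball x₀ R ×ˢ ball x₀ R
  have hS : MeasurableSet S := measurableSet_ball.prod measurableSet_ball
  have := holderConjugate_ofReal_div_sub_one (p := p) (by linarith)
  have hnonneg : ∀ᵐ z ∂(gagliardoMeasure E σ).restrict S, 0 ≤ fluxGap p u v z * incr (u - v) z :=
    .of_forall (fluxGap_mul_incr_nonneg hp u v)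
  have hint : IntegrableOn (fun z ↦ fluxGap p u v z * incr (u - v) z) S (gagliardoMeasure E σ) :=
    (h.memLp_fluxGap (by linarith)).integrable_mul h.memLp_incr_sub
  have hle : ∫ z in S, fluxGap p u v z * incr (u - v) z ∂gagliardoMeasure E σ ≤
      ∫ x in ball x₀ R, |f x * (u - v) x| :=
    le_of_tendsto (h.tendsto_setIntegral_fluxGap_mul_incr_hardyTruncation hp hσ hσp)
      (eventually_mem_nhdsWithin.mono fun ε hε ↦
        h.setIntegral_fluxGap_mul_incr_hardyTruncation_le hp hσ hσp hε)
  rw [← lintegral_add_compl _ hS, ← ofReal_integral_eq_lintegral_ofReal hint hnonneg]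
  refine (add_le_add_right (h.lintegral_compl_fluxGap_mul_incr_le hp hσ hσp) _).trans_eq ?_
  rw [← ENNReal.ofReal_add (integral_nonneg_of_ae hnonneg) (sub_nonneg.mpr hle), add_sub_cancel]

end IsComparisonPair

end EnergyInequality

section ComparisonEstimate

variable {E : Type*} [NormedAddCommGroup E] [NormedSpace ℝ E] [MeasureSpace E]
variable {p σ R : ℝ} {x₀ : E}

variable (E) in
/-- The constant of the comparison estimate: `2^{p-1}` comes from the monotonicity of the flux and
`exteriorConst` from the fractional Poincaré inequality. -/
def comparisonConst (p σ : ℝ) : ℝ≥0∞ :=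
  (ENNReal.ofReal (2 ^ (p - 1)) * (exteriorConst E σ)⁻¹ ^ p⁻¹) ^ (p / (p - 1))

variable [(volume : Measure E).IsAddHaarMeasure]

theorem comparisonConst_ne_top (hp : 1 < p) (σ : ℝ) :
    comparisonConst E p σ ≠ ⊤ := by
  have hpq : p.HolderConjugate (p / (p - 1)) := .conjExponent hp
  have := hpq.inv_nonneg
  have := hpq.symm.nonneg
  have := exteriorConst_ne_zero (E := E) σ
  unfold comparisonConst
  finiteness

variable [FiniteDimensional ℝ E]

theorem comparisonConst_pos (hp : 1 < p) (σ : ℝ) : 0 < comparisonConst E p σ := by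
  have hpq : p.HolderConjugate (p / (p - 1)) := .conjExponent hp
  have hext : (exteriorConst E σ)⁻¹ ^ p⁻¹ ≠ 0 := by
    simpa only [ne_eq, ENNReal.rpow_eq_zero_iff_of_pos hpq.inv_pos, ENNReal.inv_eq_zero] using
      exteriorConst_ne_top σ
  have hpow : ENNReal.ofReal (2 ^ (p - 1)) ≠ 0 := (ENNReal.ofReal_pos.mpr (by positivity)).ne'
  exact ENNReal.rpow_pos_of_nonneg (pos_iff_ne_zero.mpr (mul_ne_zero hpow hext)) hpq.symm.nonneg

variable [BorelSpace E] [Nontrivial E]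

theorem fractional_poincare_ball {w : E → ℝ} (hσ : 0 < σ) (hw : Measurable w)
    (hw0 : ∀ᵐ x, x ∉ ball x₀ R → w x = 0) :
    exteriorConst E σ * (ENNReal.ofReal (R ^ (-σ)) * ∫⁻ x in ball x₀ R, ‖w x‖ₑ ^ p) ≤
      ∫⁻ z, ‖incr w z‖ₑ ^ p ∂gagliardoMeasure E σ := by
  have hB : MeasurableSet (ball x₀ R) := measurableSet_ball
  calc exteriorConst E σ * (ENNReal.ofReal (R ^ (-σ)) * ∫⁻ x in ball x₀ R, ‖w x‖ₑ ^ p)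
      ≤ exteriorConst E σ * hardyEnergy p σ x₀ R w 1 := by
        gcongr
        exact mul_lintegral_ball_le_hardyEnergy_one hσ
    _ ≤ ∫⁻ z in ball x₀ R ×ˢ (ball x₀ R)ᶜ, ‖w z.1‖ₑ ^ p * ‖(1 : E → ℝ) z.1‖ₑ ^ 2
          ∂gagliardoMeasure E σ := exteriorConst_mul_hardyEnergy_le hσ hw measurable_one
    _ = ∫⁻ z in ball x₀ R ×ˢ (ball x₀ R)ᶜ, ‖incr w z‖ₑ ^ p ∂gagliardoMeasure E σ := by
        refine lintegral_congr_ae ((ae_restrict_iff' (hB.prod hB.compl)).mpr ?_)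
        filter_upwards [ae_fst_and_snd_gagliardoMeasure σ hw0] with z hz hzB
        simp only [incr, hz.2 hzB.2, sub_zero, Pi.one_apply, enorm_one, one_pow, mul_one]
    _ ≤ ∫⁻ z, ‖incr w z‖ₑ ^ p ∂gagliardoMeasure E σ := setLIntegral_le_lintegral _ _

namespace IsComparisonPair

variable {f u v : E → ℝ}

theorem lintegral_incr_sub_le_mul_ofReal_integral (hp : 2 ≤ p) (hσ : 0 < σ) (hσp : σ < p)
    (h : IsComparisonPair p σ x₀ R f u v) :
    ∫⁻ z, ‖incr (u - v) z‖ₑ ^ p ∂gagliardoMeasure E σ ≤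
      ENNReal.ofReal (2 ^ (p - 1)) * ENNReal.ofReal (∫ x in ball x₀ R, |f x * (u - v) x|) := by
  calc ∫⁻ z, ‖incr (u - v) z‖ₑ ^ p ∂gagliardoMeasure E σ
      ≤ ∫⁻ z, ENNReal.ofReal (2 ^ (p - 1)) *
          ENNReal.ofReal (fluxGap p u v z * incr (u - v) z) ∂gagliardoMeasure E σ := by
        refine lintegral_mono fun z ↦ ?_
        rw [Real.enorm_eq_ofReal_abs, ENNReal.ofReal_rpow_of_nonneg (abs_nonneg _) (by linarith),
          ← ENNReal.ofReal_mul (by positivity)]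
        refine ENNReal.ofReal_le_ofReal ((inv_mul_le_iff₀ (by positivity)).mp ?_)
        rw [← Real.rpow_neg two_pos.le]
        exact two_rpow_neg_mul_abs_incr_sub_rpow_le hp u v z
    _ ≤ _ := by
        rw [lintegral_const_mul' _ _ ENNReal.ofReal_ne_top]
        gcongr
        exact h.lintegral_fluxGap_mul_incr_le hp hσ hσp

theorem lintegral_incr_sub_rpow_le (hp : 2 ≤ p) (hσ : 0 < σ) (hσp : σ < p) (hR : 0 < R)
    (h : IsComparisonPair p σ x₀ R f u v) :
    ∫⁻ z, ‖incr (u - v) z‖ₑ ^ p ∂gagliardoMeasure E σ ≤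
      comparisonConst E p σ * ENNReal.ofReal (R ^ (σ / p * (p / (p - 1)))) *
        ∫⁻ x in ball x₀ R, ‖f x‖ₑ ^ (p / (p - 1)) := by
  have hpq : p.HolderConjugate (p / (p - 1)) := .conjExponent (by linarith)
  set X := ∫⁻ z, ‖incr (u - v) z‖ₑ ^ p ∂gagliardoMeasure E σ
  set I := ∫⁻ x in ball x₀ R, ‖f x‖ₑ ^ (p / (p - 1))
  set W := ∫⁻ x in ball x₀ R, ‖(u - v) x‖ₑ ^ p
  have hX := h.lintegral_incr_sub_le_mul_ofReal_integral hp hσ hσp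
  have hW : W ≤ (exteriorConst E σ)⁻¹ * (ENNReal.ofReal (R ^ σ) * X) := by
    rw [← ENNReal.mul_le_iff_le_inv (exteriorConst_ne_zero σ) (exteriorConst_ne_top σ),
      ← inv_inv (R ^ σ), ENNReal.ofReal_inv_of_pos (by positivity), ← Real.rpow_neg hR.le,
      ← ENNReal.mul_le_iff_le_inv (ENNReal.ofReal_pos.mpr (by positivity)).ne'
        ENNReal.ofReal_ne_top, mul_left_comm]
    exact fractional_poincare_ball hσ h.measurable_sub h.ae_sub_eq_zero
  have hXW : X ≤ ENNReal.ofReal (2 ^ (p - 1)) * (exteriorConst E σ)⁻¹ ^ p⁻¹ *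
      ENNReal.ofReal (R ^ (σ / p)) * I ^ (p / (p - 1))⁻¹ * X ^ p⁻¹ :=
    calc X ≤ ENNReal.ofReal (2 ^ (p - 1)) * (I ^ (p / (p - 1))⁻¹ * W ^ p⁻¹) :=
          hX.trans (mul_le_mul_right (h.ofReal_integral_source_mul_sub_le (by linarith)) _)
      _ ≤ ENNReal.ofReal (2 ^ (p - 1)) * (I ^ (p / (p - 1))⁻¹ *
          ((exteriorConst E σ)⁻¹ * (ENNReal.ofReal (R ^ σ) * X)) ^ p⁻¹) := by
          gcongr
      _ = _ := by
          rw [ENNReal.mul_rpow_of_nonneg _ _ hpq.inv_nonneg,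
            ENNReal.mul_rpow_of_nonneg _ _ hpq.inv_nonneg,
            ENNReal.ofReal_rpow_of_nonneg (by positivity) hpq.inv_nonneg, ← Real.rpow_mul hR.le,
            ← div_eq_mul_inv σ p]
          ring
  refine (le_rpow_of_le_mul_rpow_inv hpq ?_ hXW).trans_eq ?_
  · exact (hX.trans_lt (ENNReal.mul_lt_top ENNReal.ofReal_lt_top ENNReal.ofReal_lt_top)).ne
  · rw [ENNReal.mul_rpow_of_nonneg _ _ hpq.symm.nonneg, ENNReal.rpow_inv_rpow hpq.symm.ne_zero,
      ENNReal.mul_rpow_of_nonneg _ _ hpq.symm.nonneg,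
      ENNReal.ofReal_rpow_of_nonneg (by positivity) hpq.symm.nonneg, ← Real.rpow_mul hR.le,
      comparisonConst]

end IsComparisonPair

end ComparisonEstimate

section EuclideanSpace

variable {n : ℕ} {p s : ℝ}

theorem ofReal_abs_rpow_eq_enorm_rpow {p : ℝ} (hp : 0 ≤ p) (a : ℝ) :
    ENNReal.ofReal (|a| ^ p) = ‖a‖ₑ ^ p := by
  rw [Real.enorm_eq_ofReal_abs, ENNReal.ofReal_rpow_of_nonneg (abs_nonneg a) hp]

theorem gagliardoE_eq_lintegral_gagliardoMeasure (hp : 0 ≤ p) {D : Set (EuclideanSpace ℝ (Fin n))}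
    (hD : MeasurableSet D) {u : EuclideanSpace ℝ (Fin n) → ℝ} (hu : Measurable u) :
    gagliardoE n s p D u =
      ∫⁻ z in D ×ˢ D, ‖incr u z‖ₑ ^ p ∂gagliardoMeasure (EuclideanSpace ℝ (Fin n)) (s * p) := by
  have := measurable_incr hu
  rw [setLIntegral_prod_gagliardoMeasure _ hD hD (by fun_prop), gagliardoE]
  refine lintegral_congr fun x ↦ lintegral_congr fun y ↦ ?_
  have hker := div_dist_rpow_eq_mul_gagliardoKernel (s * p) (|u x - u y| ^ p) x y
  rw [finrank_euclideanSpace_fin] at hker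
  rw [hker, ENNReal.ofReal_mul (gagliardoKernel_nonneg ..), ofReal_abs_rpow_eq_enorm_rpow hp]
  rfl

theorem gagliardoE_mono {D D' : Set (EuclideanSpace ℝ (Fin n))} (h : D ⊆ D')
    (u : EuclideanSpace ℝ (Fin n) → ℝ) : gagliardoE n s p D u ≤ gagliardoE n s p D' u :=
  (lintegral_mono fun _ ↦ lintegral_mono_set h).trans (lintegral_mono_set h)

theorem memTailSobolev_of_gagliardoE_lt_top (hp : 0 < p) {D : Set (EuclideanSpace ℝ (Fin n))}
    (hD : MeasurableSet D) {u : EuclideanSpace ℝ (Fin n) → ℝ} (hu : Measurable u)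
    (hup : ∫⁻ x in D, ENNReal.ofReal (|u x| ^ p) < ⊤) (huD : gagliardoE n s p D u < ⊤)
    (htail : ∫⁻ x, ENNReal.ofReal (|u x| ^ (p - 1) / (1 + ‖x‖) ^ ((n : ℝ) + s * p)) < ⊤) :
    MemTailSobolev p (s * p) D u where
  measurable := hu
  memLp := by
    simpa only [memLp_ofReal_iff_lintegral_lt_top hp hu.aestronglyMeasurable,
      ofReal_abs_rpow_eq_enorm_rpow hp.le] using hup
  memLp_incr := by
    rwa [memLp_ofReal_iff_lintegral_lt_top hp (measurable_incr hu).aestronglyMeasurable,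
      ← gagliardoE_eq_lintegral_gagliardoMeasure hp.le hD hu]
  integrable_tail := by
    refine ⟨by fun_prop, ?_⟩
    rw [hasFiniteIntegral_iff_ofReal (.of_forall fun x ↦ by positivity), finrank_euclideanSpace_fin]
    simpa only [Real.rpow_neg (add_nonneg zero_le_one (norm_nonneg _)), div_eq_mul_inv] using htail

namespace IsLocalWeakSolution

variable {D : Set (EuclideanSpace ℝ (Fin n))} {f u : EuclideanSpace ℝ (Fin n) → ℝ}
  {x₀ : EuclideanSpace ℝ (Fin n)} {r R : ℝ}

theorem memTailSobolev_ball (hp : 0 < p) (hu : IsLocalWeakSolution n p s D f u)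
    (hRD : closedBall x₀ R ⊆ D) : MemTailSobolev p (s * p) (ball x₀ R) u := by
  obtain ⟨hum, hloc, htail, -⟩ := hu
  obtain ⟨hup, huD⟩ := hloc _ hRD (isCompact_closedBall x₀ R)
  exact memTailSobolev_of_gagliardoE_lt_top hp measurableSet_ball hum
    ((lintegral_mono_set ball_subset_closedBall).trans_lt hup)
    ((gagliardoE_mono ball_subset_closedBall u).trans_lt huD) htail

theorem integral_sgnPow_incr_mul_incr (hp : 1 < p) (hsp : 0 < s * p)
    (hu : IsLocalWeakSolution n p s D f u) (huB : MemTailSobolev p (s * p) (ball x₀ R) u)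
    (hrR : r < R) (hBD : ball x₀ R ⊆ D) {φ : EuclideanSpace ℝ (Fin n) → ℝ} (hφ : Measurable φ)
    (hφp : MemLp φ (ENNReal.ofReal p))
    (hDφ : MemLp (incr φ) (ENNReal.ofReal p) (gagliardoMeasure (EuclideanSpace ℝ (Fin n)) (s * p)))
    (hφ0 : ∀ x ∉ closedBall x₀ r, φ x = 0) :
    ∫ z, sgnPow (p - 1) (incr u z) * incr φ z ∂gagliardoMeasure (EuclideanSpace ℝ (Fin n)) (s * p) =
      ∫ x in ball x₀ R, f x * φ x := by
  have hp0 : 0 < p := by linarith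
  have hrB : closedBall x₀ r ⊆ ball x₀ R := closedBall_subset_ball hrR
  have hweak := hu.2.2.2 φ hφ
    ⟨closedBall x₀ r, isCompact_closedBall x₀ r, hrB.trans hBD, .of_forall hφ0⟩
    (by simpa only [ofReal_abs_rpow_eq_enorm_rpow hp0.le] using
      (memLp_ofReal_iff_lintegral_lt_top hp0 hφp.1).mp hφp)
    (by
      rw [gagliardoE_eq_lintegral_gagliardoMeasure hp0.le .univ hφ, univ_prod_univ,
        Measure.restrict_univ]
      exact (memLp_ofReal_iff_lintegral_lt_top hp0 hDφ.1).mp hDφ)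
  have hintegrable := integrable_sgnPow_incr_mul_incr hp hsp hrR huB hφ hφp hDφ hφ0
  have hsupp {S : Set (EuclideanSpace ℝ (Fin n))} (hS : closedBall x₀ r ⊆ S) :
      ∫ x in S, f x * φ x = ∫ x, f x * φ x :=
    setIntegral_eq_integral_of_forall_compl_eq_zero fun x hx ↦ by
      rw [hφ0 x (fun h ↦ hx (hS h)), mul_zero]
  rw [hsupp hrB, ← hsupp (hrB.trans hBD), ← hweak, ← integral_integral_div_dist_rpow _ hintegrable,
    finrank_euclideanSpace_fin]
  simp only [sgnPow, incr, sub_sub, one_add_one_eq_two]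

theorem isComparisonPair {f u v : EuclideanSpace ℝ (Fin n) → ℝ} (hp : 2 ≤ p) (hsp : 0 < s * p)
    (hf : MemLploc n (p / (p - 1)) D f) (hRD : closedBall x₀ R ⊆ D)
    (hu : IsLocalWeakSolution n p s D f u)
    (hv : IsLocalWeakSolution n p s (ball x₀ R) (fun _ ↦ 0) v)
    (hvp : ∫⁻ x in ball x₀ R, ENNReal.ofReal (|v x| ^ p) < ⊤)
    (hvB : gagliardoE n s p (ball x₀ R) v < ⊤) (hvu : ∀ᵐ x, x ∉ ball x₀ R → v x = u x) :
    IsComparisonPair p (s * p) x₀ R f u v := by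
  have hp0 : 0 < p := by linarith
  have hq : 0 < p / (p - 1) := div_pos hp0 (by linarith)
  have hBD : ball x₀ R ⊆ D := ball_subset_closedBall.trans hRD
  have hul := hu.memTailSobolev_ball hp0 hRD
  have hvr := memTailSobolev_of_gagliardoE_lt_top hp0 measurableSet_ball hv.1 hvp hvB hv.2.2.1
  refine ⟨hul, hvr, ?_, hvu, fun φ hφ hφp hDφ ⟨r, hrR, hφ0⟩ ↦ ?_⟩
  · rw [memLp_ofReal_iff_lintegral_lt_top hq hf.1.aestronglyMeasurable]
    simp only [← ofReal_abs_rpow_eq_enorm_rpow hq.le]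
    exact (lintegral_mono_set ball_subset_closedBall).trans_lt
      (hf.2 _ hRD (isCompact_closedBall x₀ R))
  · have hint {g : EuclideanSpace ℝ (Fin n) → ℝ} (hg : MemTailSobolev p (s * p) (ball x₀ R) g) :=
      integrable_sgnPow_incr_mul_incr (by linarith) hsp hrR hg hφ hφp hDφ hφ0
    simp only [fluxGap, sub_mul]
    rw [integral_sub (hint hul) (hint hvr),
      hu.integral_sgnPow_incr_mul_incr (by linarith) hsp hul hrR hBD hφ hφp hDφ hφ0,
      hv.integral_sgnPow_incr_mul_incr (by linarith) hsp hvr hrR subset_rfl hφ hφp hDφ hφ0]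
    simp only [zero_mul, integral_zero, sub_zero]

end IsLocalWeakSolution

theorem gagliardoE_fin_zero (hp : p ≠ 0) (D : Set (EuclideanSpace ℝ (Fin 0)))
    (u : EuclideanSpace ℝ (Fin 0) → ℝ) : gagliardoE 0 s p D u = 0 := by
  have hzero (x y : EuclideanSpace ℝ (Fin 0)) : |u x - u y| ^ p = 0 := by
    rw [Subsingleton.elim x y, sub_self, abs_zero, Real.zero_rpow hp]
  simp only [gagliardoE, hzero, zero_div, ENNReal.ofReal_zero, lintegral_zero]

end EuclideanSpace

theorem comparison_fractional_seminorm_superquadratic_general (n : ℕ) (p s : ℝ) (hp : 2 ≤ p)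
    (hs₁ : 0 < s) (hs₂ : s < 1) :
    ∃ c : ℝ, 0 < c ∧
      ∀ (Ω : Set (EuclideanSpace ℝ (Fin n))) (f u v : EuclideanSpace ℝ (Fin n) → ℝ)
        (x₀ : EuclideanSpace ℝ (Fin n)) (R : ℝ),
        MemLploc n (p / (p - 1)) Ω f →
        0 < R → closedBall x₀ R ⊆ Ω →
        IsLocalWeakSolution n p s Ω f u →
        IsLocalWeakSolution n p s (ball x₀ R) (fun _ ↦ 0) v →
        (∫⁻ x in ball x₀ R, ENNReal.ofReal (|v x| ^ p)) < ⊤ →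
        gagliardoE n s p (ball x₀ R) v < ⊤ →
        (∀ᵐ x, x ∉ ball x₀ R → v x = u x) →
        gagliardoE n s p univ (fun x ↦ u x - v x) ≤
          ENNReal.ofReal (c * R ^ (s * (p / (p - 1)))) *
            ∫⁻ x in ball x₀ R, ENNReal.ofReal (|f x| ^ (p / (p - 1))) := by
  have hp0 : 0 < p := by linarith
  have hsp : s * p < p := mul_lt_of_lt_one_left hp0 hs₂
  obtain rfl | hn := eq_or_ne n 0
  · exact ⟨1, one_pos, fun _ _ _ _ _ _ _ _ _ _ _ _ _ _ ↦
      (gagliardoE_fin_zero hp0.ne' _ _).trans_le zero_le⟩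
  have : NeZero n := ⟨hn⟩
  have hK := comparisonConst_ne_top (E := EuclideanSpace ℝ (Fin n)) (by linarith : 1 < p) (s * p)
  refine ⟨(comparisonConst (EuclideanSpace ℝ (Fin n)) p (s * p)).toReal,
    ENNReal.toReal_pos (comparisonConst_pos (by linarith) _).ne' hK, ?_⟩
  intro Ω f u v x₀ R hf hR hΩ hu hv hvp hvB hvu
  have hpair := hu.isComparisonPair hp (mul_pos hs₁ hp0) hf hΩ hv hvp hvB hvu
  have hest := hpair.lintegral_incr_sub_rpow_le hp (mul_pos hs₁ hp0) hsp hR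
  have hq : 0 ≤ p / (p - 1) := div_nonneg hp0.le (by linarith)
  change gagliardoE n s p univ (u - v) ≤ _
  rw [gagliardoE_eq_lintegral_gagliardoMeasure hp0.le .univ (hu.1.sub hv.1), univ_prod_univ,
    Measure.restrict_univ, ENNReal.ofReal_mul ENNReal.toReal_nonneg, ENNReal.ofReal_toReal hK]
  simpa only [ofReal_abs_rpow_eq_enorm_rpow hq, mul_div_cancel_right₀ s hp0.ne'] using hest

theorem comparison_fractional_seminorm_superquadratic (n : ℕ) (p s : ℝ) (hp : 2 ≤ p)
    (hs₁ : 0 < s) (hs₂ : s < 1) :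
    ∃ c : ℝ, 0 < c ∧
      ∀ (Ω : Set (EuclideanSpace ℝ (Fin n))) (f u v : EuclideanSpace ℝ (Fin n) → ℝ)
        (x₀ : EuclideanSpace ℝ (Fin n)) (R : ℝ),
        IsOpen Ω → Bornology.IsBounded Ω →
        MemLploc n (p / (p - 1)) Ω f →
        0 < R → closedBall x₀ (2 * R) ⊆ Ω →
        IsLocalWeakSolution n p s Ω f u →
        IsLocalWeakSolution n p s (ball x₀ R) (fun _ => 0) v →
        (∫⁻ x in ball x₀ R, ENNReal.ofReal (|v x| ^ p)) < ⊤ →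
        gagliardoE n s p (ball x₀ R) v < ⊤ →
        (∀ᵐ x, x ∉ ball x₀ R → v x = u x) →
        gagliardoE n s p Set.univ (fun x => u x - v x) ≤
          ENNReal.ofReal (c * R ^ (s * (p / (p - 1)))) *
            ∫⁻ x in ball x₀ R, ENNReal.ofReal (|f x| ^ (p / (p - 1))) :=
  let ⟨c, hc, h⟩ := comparison_fractional_seminorm_superquadratic_general n p s hp hs₁ hs₂
  ⟨c, hc, fun Ω f u v x₀ R _ _ hf hR hΩ ↦
    h Ω f u v x₀ R hf hR ((closedBall_subset_closedBall (by linarith)).trans hΩ)⟩
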